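/- Let k ≥ 1 and s ≥ 1 be integers. There exists a constant c_s = c(s,k) > 0 such that for all constants c₀, C₀, C > 0 and every T > 0 there exists a constant C̃_s > 0 depending only on s, k, T, c₀, C₀, C with the following property: for every ε > 0, every Schwartz-class solution u of the KdV equation on [0,T] and every Schwartz-class solution U on [0,T] of the equation ∂_t U + ∂_x^3 U + U^k ∂_x U = 0, whose initial data u₀ := u(0) ≠ 0 and U₀ := U(0) ≠ 0 satisfy T ≤ c_s · min{ ‖U₀‖_{H^{s+1}}^{-k}, ‖u₀‖_{H^{s+1}}^{-1} }, ‖u₀‖_{H^{s+1}} ≤ c₀ ε, ‖U₀‖_{H^{s+1}} ≤ C₀ ε, and ‖u₀ − U₀‖_{H^s} ≤ C·max{ε², ε^{k+1}}, one has sup_{t ∈ [0,T]} ‖u(t) − U(t)‖_{H^s} ≤ C̃_s·max{ε², ε^{k+1}}, and consequently sup_{t ∈ [0,T]} ‖u(t) − U(t)‖_{L^∞} ≤ C̃_s·max{ε², ε^{k+1}}. -/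

import Mathlib

open MeasureTheory Real

/-- The Sobolev `H^s` norm of a function `f : ℝ → ℝ`. -/
noncomputable def hNorm (s : ℕ) (f : ℝ → ℝ) : ℝ :=
  Real.sqrt (∑ n ∈ Finset.range (s + 1), ∫ x : ℝ, (iteratedDeriv n f x) ^ 2)

/-- The `L^∞` (sup) norm of `f : ℝ → ℝ`. -/
noncomputable def linfNorm (f : ℝ → ℝ) : ℝ := ⨆ x : ℝ, |f x|

/-- A Schwartz-class solution of `∂ₜU + ∂ₓ³U + F(U) ∂ₓU = 0` on `[0,T]`. -/
def IsSchwartzSolution (F : ℝ → ℝ) (T : ℝ) (U : ℝ → SchwartzMap ℝ ℝ) : Prop :=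
  ContDiff ℝ (⊤ : ℕ∞) (fun p : ℝ × ℝ => U p.1 p.2) ∧
  ∀ t ∈ Set.Icc (0 : ℝ) T, ∀ x : ℝ,
    deriv (fun τ : ℝ => U τ x) t + iteratedDeriv 3 (⇑(U t)) x
      + F (U t x) * deriv (⇑(U t)) x = 0

/-!
For the difference `w = u - U` the dispersive part of `∂ₜ∫ (∂ₓ^m w)²` is a total derivative, so
only the two nonlinearities contribute; they are quadratic in `u` and of degree `k + 1` in `U`,
hence of size `max (ε ^ 2) (ε ^ (k + 1))` in `H^s` as long as `u` and `U` stay of size `ε` in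
`H^(s+1)`. They do so on a time interval of the assumed length: the growth of the `H^(s+1)` norms
obeys a differential inequality, proved through difference quotients in `x` so as not to lose a
derivative.

Since the solutions are only jointly smooth with Schwartz slices, boundedness of
`t ↦ ‖U(t)‖_{H^N}` is itself a claim. A Baire category argument gives it on an open dense set of
times, and the bound extends across the remaining times because mass, energy and a modified
second-order energy, followed by Grönwall for the higher norms, prevent blow-up at the endpoints of
gaps. For `k > 1` the energy is coercive only once `U` is bounded, which is the case when
`‖u - U‖_{L^∞}` is bounded on `[0, T]`.
-/

section

open Filter Topology Set
open scoped ContDiff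

/-! ### Quantitative `L¹` and `L²` bounds -/

/-- `g` is continuous and integrable with `‖g‖_{L¹} ≤ K`. -/
structure L1Bound (g : ℝ → ℝ) (K : ℝ) : Prop where
  cont : Continuous g
  int : Integrable g
  le : ∫ x, |g x| ≤ K

/-- `g` is continuous and square integrable with `‖g‖_{L²}² ≤ X`. -/
structure L2SqBound (g : ℝ → ℝ) (X : ℝ) : Prop where
  cont : Continuous g
  int : Integrable (fun x => g x ^ 2)
  le : ∫ x, g x ^ 2 ≤ X

section Bounds

variable {f g : ℝ → ℝ} {X Y : ℝ}

namespace L1Bound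

theorem mono (hg : L1Bound g X) (hXY : X ≤ Y) : L1Bound g Y :=
  ⟨hg.cont, hg.int, hg.le.trans hXY⟩

theorem add (hf : L1Bound f X) (hg : L1Bound g Y) : L1Bound (fun x => f x + g x) (X + Y) := by
  refine ⟨hf.cont.add hg.cont, hf.int.add hg.int, ?_⟩
  calc ∫ x, |f x + g x| ≤ ∫ x, (|f x| + |g x|) :=
        integral_mono (hf.int.add hg.int).abs (hf.int.abs.add hg.int.abs) fun x => abs_add_le _ _
    _ = (∫ x, |f x|) + ∫ x, |g x| := integral_add hf.int.abs hg.int.abs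
    _ ≤ X + Y := add_le_add hf.le hg.le

theorem const_mul (c : ℝ) (hg : L1Bound g X) : L1Bound (fun x => c * g x) (|c| * X) := by
  refine ⟨continuous_const.mul hg.cont, hg.int.const_mul c, ?_⟩
  simp_rw [abs_mul]
  rw [integral_const_mul]
  exact mul_le_mul_of_nonneg_left hg.le (abs_nonneg c)

theorem abs_integral_le (hg : L1Bound g X) : |∫ x, g x| ≤ X :=
  abs_integral_le_integral_abs.trans hg.le

theorem bounded_mul {b : ℝ → ℝ} {β : ℝ} (hb : Continuous b) (hβ : ∀ x, |b x| ≤ β)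
    (hg : L1Bound g X) : L1Bound (fun x => b x * g x) (β * X) := by
  have hle : ∀ x, |b x * g x| ≤ β * |g x| := fun x => by
    rw [abs_mul]
    exact mul_le_mul_of_nonneg_right (hβ x) (abs_nonneg _)
  have h_int : Integrable fun x => b x * g x :=
    (hg.int.abs.const_mul β).mono' (hb.mul hg.cont).aestronglyMeasurable (.of_forall hle)
  refine ⟨hb.mul hg.cont, h_int, (integral_mono h_int.abs (hg.int.abs.const_mul β) hle).trans ?_⟩
  rw [integral_const_mul]
  exact mul_le_mul_of_nonneg_left hg.le ((abs_nonneg _).trans (hβ 0))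

end L1Bound

theorem two_mul_abs_mul_le {l : ℝ} (hl : 0 < l) (a b : ℝ) :
    2 * |a * b| ≤ l * a ^ 2 + l⁻¹ * b ^ 2 := by
  have h : (l * |a| - |b|) ^ 2 / l = l * a ^ 2 - 2 * |a * b| + l⁻¹ * b ^ 2 := by
    rw [abs_mul, ← sq_abs a, ← sq_abs b]
    field_simp
    ring
  linarith [div_nonneg (sq_nonneg (l * |a| - |b|)) hl.le]

namespace L2SqBound

theorem mono (hg : L2SqBound g X) (hXY : X ≤ Y) : L2SqBound g Y :=
  ⟨hg.cont, hg.int, hg.le.trans hXY⟩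

theorem nonneg (hg : L2SqBound g X) : 0 ≤ X :=
  (integral_nonneg fun _ => sq_nonneg _).trans hg.le

theorem of_sq_le (hg : Continuous g) (hf : Integrable f) (hle : ∀ x, g x ^ 2 ≤ f x)
    (hX : ∫ x, f x ≤ X) : L2SqBound g X := by
  have hi : Integrable fun x => g x ^ 2 :=
    hf.mono' (hg.pow 2).aestronglyMeasurable (.of_forall fun x => by
      simpa only [norm_pow, norm_eq_abs, sq_abs] using hle x)
  exact ⟨hg, hi, (integral_mono hi hf hle).trans hX⟩

theorem add (hf : L2SqBound f X) (hg : L2SqBound g Y) :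
    L2SqBound (fun x => f x + g x) (2 * X + 2 * Y) := by
  refine of_sq_le (hf.cont.add hg.cont) ((hf.int.const_mul 2).add (hg.int.const_mul 2))
    (fun x => (add_sq_le : _ ≤ 2 * (f x ^ 2 + g x ^ 2)).trans_eq (mul_add _ _ _)) ?_
  simp only [Pi.add_apply]
  rw [integral_add (hf.int.const_mul 2) (hg.int.const_mul 2), integral_const_mul,
    integral_const_mul]
  linarith [hf.le, hg.le]

theorem bounded_mul {b : ℝ → ℝ} {β : ℝ} (hb : Continuous b) (hβ : ∀ x, b x ^ 2 ≤ β)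
    (hg : L2SqBound g X) : L2SqBound (fun x => b x * g x) (β * X) := by
  refine of_sq_le (hb.mul hg.cont) (hg.int.const_mul β) (fun x => ?_) ?_
  · rw [mul_pow]
    exact mul_le_mul_of_nonneg_right (hβ x) (sq_nonneg _)
  · rw [integral_const_mul]
    exact mul_le_mul_of_nonneg_left hg.le ((sq_nonneg _).trans (hβ 0))

theorem const_mul (c : ℝ) (hg : L2SqBound g X) : L2SqBound (fun x => c * g x) (c ^ 2 * X) :=
  bounded_mul continuous_const (fun _ => le_rfl) hg

theorem sub (hf : L2SqBound f X) (hg : L2SqBound g Y) :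
    L2SqBound (fun x => f x - g x) (2 * X + 2 * Y) := by
  simpa [sub_eq_add_neg] using hf.add (hg.const_mul (-1))

theorem comp_add_right (hg : L2SqBound g X) (a : ℝ) : L2SqBound (fun x => g (x + a)) X :=
  ⟨hg.cont.comp (continuous_id.add continuous_const), hg.int.comp_add_right a,
    (integral_add_right_eq_self (fun x => g x ^ 2) a).trans_le hg.le⟩

theorem mul (hf : L2SqBound f X) (hg : L2SqBound g Y) {l : ℝ} (hl : 0 < l) :
    L1Bound (fun x => f x * g x) ((l * X + l⁻¹ * Y) / 2) := by
  have hmaj : Integrable fun x => (l * f x ^ 2 + l⁻¹ * g x ^ 2) / 2 :=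
    ((hf.int.const_mul l).add (hg.int.const_mul l⁻¹)).div_const 2
  have hle : ∀ x, |f x * g x| ≤ (l * f x ^ 2 + l⁻¹ * g x ^ 2) / 2 := fun x => by
    linarith [two_mul_abs_mul_le hl (f x) (g x)]
  have h_int : Integrable fun x => f x * g x :=
    hmaj.mono' (hf.cont.mul hg.cont).aestronglyMeasurable (.of_forall hle)
  refine ⟨hf.cont.mul hg.cont, h_int, (integral_mono h_int.abs hmaj hle).trans ?_⟩
  rw [integral_div, integral_add (hf.int.const_mul l) (hg.int.const_mul l⁻¹), integral_const_mul,
    integral_const_mul]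
  gcongr
  exacts [hf.le, hg.le]

/- The weight `l` splits the product in `‖f‖_{L^∞}² ≤ 2 ‖f‖_{L²} ‖f'‖_{L²}`. -/
theorem sq_apply_le {f' : ℝ → ℝ} (hderiv : ∀ x, HasDerivAt f (f' x) x) (hf : L2SqBound f X)
    (hf' : L2SqBound f' Y) {l : ℝ} (hl : 0 < l) (x : ℝ) : f x ^ 2 ≤ l * X + l⁻¹ * Y := by
  have hsq : ∀ y ∈ Iic x, HasDerivAt (fun y => f y ^ 2) (2 * (f y * f' y)) y := fun y _ =>
    ((hderiv y).pow 2).congr_deriv (by push_cast; ring)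
  have hff' : L1Bound (fun y => 2 * (f y * f' y)) (l * X + l⁻¹ * Y) :=
    ((hf.mul hf' hl).const_mul 2).mono (by rw [abs_two]; linarith)
  have h_int := hff'.int.integrableOn (s := Iic x)
  have hvanish := tendsto_zero_of_hasDerivAt_of_integrableOn_Iic hsq h_int hf.int.integrableOn
  calc f x ^ 2 = ∫ y in Iic x, 2 * (f y * f' y) := by
        rw [integral_Iic_of_hasDerivAt_of_tendsto' hsq h_int hvanish, sub_zero]
    _ ≤ ∫ y in Iic x, |2 * (f y * f' y)| := integral_mono h_int h_int.abs fun y => le_abs_self _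
    _ ≤ ∫ y, |2 * (f y * f' y)| :=
        setIntegral_le_integral hff'.int.abs (.of_forall fun y => abs_nonneg _)
    _ ≤ l * X + l⁻¹ * Y := hff'.le

end L2SqBound

theorem l2SqBound_iff_lintegral (hg : Continuous g) (hX : 0 ≤ X) :
    L2SqBound g X ↔ ∫⁻ x, ENNReal.ofReal (g x ^ 2) ≤ ENNReal.ofReal X := by
  have hsq : 0 ≤ᵐ[volume] fun x => g x ^ 2 := .of_forall fun _ => sq_nonneg _
  refine ⟨fun h => ?_, fun h => ?_⟩
  · rw [← ofReal_integral_eq_lintegral_ofReal h.int hsq]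
    exact ENNReal.ofReal_le_ofReal h.le
  · have hi : Integrable fun x => g x ^ 2 := by
      refine ⟨(hg.pow 2).aestronglyMeasurable, ?_⟩
      rw [hasFiniteIntegral_iff_ofReal hsq]
      exact h.trans_lt ENNReal.ofReal_lt_top
    rw [← ofReal_integral_eq_lintegral_ofReal hi hsq, ENNReal.ofReal_le_ofReal_iff hX] at h
    exact ⟨hg, hi, h⟩

end Bounds

/-! ### Difference quotients -/

/-- The difference quotient of `f` with step `h` (identically `0` for `h = 0`). Energy estimates
are run on difference quotients of the solution because they involve one derivative less than
the norm they control. -/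
noncomputable def diffQuot (h : ℝ) (f : ℝ → ℝ) (x : ℝ) : ℝ := (f (x + h) - f x) / h

section DiffQuot

variable {f f' : ℝ → ℝ} {h X : ℝ}

theorem hasDerivAt_diffQuot (h : ℝ) (hf : ∀ x, HasDerivAt f (f' x) x) (x : ℝ) :
    HasDerivAt (diffQuot h f) (diffQuot h f' x) x :=
  (((hf (x + h)).comp_add_const x h).sub (hf x)).div_const h

theorem continuous_diffQuot (h : ℝ) (hf : Continuous f) : Continuous (diffQuot h f) :=
  ((hf.comp (continuous_id.add continuous_const)).sub hf).div_const h

theorem diffQuot_eq_integral (hf : ∀ x, HasDerivAt f (f' x) x) (hf' : Continuous f') (hh : h ≠ 0)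
    (x : ℝ) : diffQuot h f x = ∫ θ in (0 : ℝ)..1, f' (x + θ * h) := by
  have hline : ∀ θ : ℝ, HasDerivAt (fun θ => x + θ * h) h θ := fun θ => by
    simpa using ((hasDerivAt_id θ).mul_const h).const_add x
  have hder : ∀ θ ∈ uIcc (0 : ℝ) 1,
      HasDerivAt (fun θ => f (x + θ * h) / h) (f' (x + θ * h)) θ := fun θ _ =>
    (((hf (x + θ * h)).comp θ (hline θ)).div_const h).congr_deriv (mul_div_cancel_right₀ _ hh)
  rw [intervalIntegral.integral_eq_sub_of_hasDerivAt hder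
    ((hf'.comp (by fun_prop)).intervalIntegrable _ _)]
  simp only [diffQuot, one_mul, zero_mul, add_zero, sub_div]

theorem abs_diffQuot_le {β : ℝ} (hf : ∀ x, HasDerivAt f (f' x) x) (hf' : Continuous f')
    (hβ : ∀ x, |f' x| ≤ β) (hh : h ≠ 0) (x : ℝ) : |diffQuot h f x| ≤ β := by
  simpa [diffQuot_eq_integral hf hf' hh] using
    intervalIntegral.norm_integral_le_of_norm_le_const (a := 0) (b := 1)
      (f := fun θ => f' (x + θ * h)) fun θ _ => hβ (x + θ * h)

theorem sq_intervalIntegral_le {φ : ℝ → ℝ} (hφ : Continuous φ) :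
    (∫ θ in (0 : ℝ)..1, φ θ) ^ 2 ≤ ∫ θ in (0 : ℝ)..1, φ θ ^ 2 := by
  have : IsProbabilityMeasure (volume.restrict (Ioc (0 : ℝ) 1)) := ⟨by simp⟩
  simp only [intervalIntegral.integral_of_le zero_le_one]
  exact (even_two.convexOn_pow (𝕜 := ℝ)).map_integral_le (continuous_pow 2).continuousOn
    isClosed_univ (.of_forall fun _ => mem_univ _) hφ.integrableOn_Ioc (hφ.pow 2).integrableOn_Ioc

theorem sq_diffQuot_le (hf : ∀ x, HasDerivAt f (f' x) x) (hf' : Continuous f') (hh : h ≠ 0)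
    (x : ℝ) : ENNReal.ofReal (diffQuot h f x ^ 2) ≤
      ∫⁻ θ in Ioc (0 : ℝ) 1, ENNReal.ofReal (f' (x + θ * h) ^ 2) := by
  have hφ : Continuous fun θ : ℝ => f' (x + θ * h) := hf'.comp (by fun_prop)
  have hsq : IntegrableOn (fun θ => f' (x + θ * h) ^ 2) (Ioc 0 1) := (hφ.pow 2).integrableOn_Ioc
  rw [← ofReal_integral_eq_lintegral_ofReal hsq
    (.of_forall fun _ => sq_nonneg _), ← intervalIntegral.integral_of_le zero_le_one,
    diffQuot_eq_integral hf hf' hh]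
  exact ENNReal.ofReal_le_ofReal (sq_intervalIntegral_le hφ)

theorem L2SqBound.diffQuot_of_hasDerivAt (hf : ∀ x, HasDerivAt f (f' x) x)
    (hf' : L2SqBound f' X) (hh : h ≠ 0) : L2SqBound (diffQuot h f) X := by
  have hfc : Continuous f := continuous_iff_continuousAt.2 fun x => (hf x).continuousAt
  have hmeas : Measurable fun p : ℝ × ℝ => ENNReal.ofReal (f' (p.1 + p.2 * h) ^ 2) :=
    (ENNReal.continuous_ofReal.comp ((hf'.cont.comp (by fun_prop)).pow 2)).measurable
  rw [l2SqBound_iff_lintegral (continuous_diffQuot h hfc) hf'.nonneg]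
  calc ∫⁻ x, ENNReal.ofReal (diffQuot h f x ^ 2)
      ≤ ∫⁻ x, ∫⁻ θ in Ioc (0 : ℝ) 1, ENNReal.ofReal (f' (x + θ * h) ^ 2) :=
        lintegral_mono fun x => sq_diffQuot_le hf hf'.cont hh x
    _ = ∫⁻ θ in Ioc (0 : ℝ) 1, ∫⁻ x, ENNReal.ofReal (f' (x + θ * h) ^ 2) :=
        lintegral_lintegral_swap hmeas.aemeasurable
    _ = ∫⁻ _ in Ioc (0 : ℝ) 1, ∫⁻ x, ENNReal.ofReal (f' x ^ 2) := by
        refine lintegral_congr fun θ => ?_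
        exact lintegral_add_right_eq_self (fun x => ENNReal.ofReal (f' x ^ 2)) (θ * h)
    _ = ∫⁻ x, ENNReal.ofReal (f' x ^ 2) := by simp
    _ ≤ ENNReal.ofReal X := (l2SqBound_iff_lintegral hf'.cont hf'.nonneg).1 hf'

theorem L2SqBound.of_diffQuot (hf : ∀ x, HasDerivAt f (f' x) x) (hf' : Continuous f')
    (hX : ∀ h : ℝ, 0 < h → L2SqBound (diffQuot h f) X) : L2SqBound f' X := by
  rw [l2SqBound_iff_lintegral hf' (hX 1 one_pos).nonneg]
  let step : ℕ → ℝ := fun n => 1 / ((n : ℝ) + 1)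
  have hpos : ∀ n, 0 < step n := fun n => Nat.one_div_pos_of_nat
  have hstep : Tendsto step atTop (𝓝[≠] 0) :=
    tendsto_nhdsWithin_iff.2 ⟨tendsto_one_div_add_atTop_nhds_zero_nat,
      .of_forall fun n => (hpos n).ne'⟩
  have hlim : ∀ x, Tendsto (fun n => ENNReal.ofReal (diffQuot (step n) f x ^ 2)) atTop
      (𝓝 (ENNReal.ofReal (f' x ^ 2))) := fun x => by
    have hslope := (hasDerivAt_iff_tendsto_slope_zero.1 (hf x)).comp hstep
    refine ((ENNReal.continuous_ofReal.tendsto _).comp (hslope.pow 2)).congr fun n => ?_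
    simp [diffQuot, div_eq_inv_mul]
  have hmeas : ∀ n, Measurable fun x => ENNReal.ofReal (diffQuot (step n) f x ^ 2) :=
    fun n => (ENNReal.continuous_ofReal.comp ((hX _ (hpos n)).cont.pow 2)).measurable
  calc ∫⁻ x, ENNReal.ofReal (f' x ^ 2)
      = ∫⁻ x, liminf (fun n => ENNReal.ofReal (diffQuot (step n) f x ^ 2)) atTop :=
        lintegral_congr fun x => (hlim x).liminf_eq.symm
    _ ≤ liminf (fun n => ∫⁻ x, ENNReal.ofReal (diffQuot (step n) f x ^ 2)) atTop :=
        lintegral_liminf_le hmeas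
    _ ≤ liminf (fun _ : ℕ => ENNReal.ofReal X) atTop :=
        liminf_le_liminf (.of_forall fun n =>
          (l2SqBound_iff_lintegral (hX _ (hpos n)).cont (hX _ (hpos n)).nonneg).1 (hX _ (hpos n)))
    _ = ENNReal.ofReal X := by simp

end DiffQuot

/-! ### Balance laws on the line -/

/-- A smooth bump equal to `1` on `[-1, 1]` and supported in `[-2, 2]`. -/
noncomputable def unitBump : ContDiffBump (0 : ℝ) := ⟨1, 2, one_pos, one_lt_two⟩

/-- A smooth cutoff equal to `1` on `[-R, R]` and supported in `[-2R, 2R]`. -/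
noncomputable def cutoff (R x : ℝ) : ℝ := unitBump (R⁻¹ * x)

section Cutoff

variable {R : ℝ}

theorem contDiff_cutoff : ContDiff ℝ ∞ (cutoff R) :=
  unitBump.contDiff.comp (contDiff_const.mul contDiff_id)

theorem hasCompactSupport_cutoff (hR : 0 < R) : HasCompactSupport (cutoff R) := by
  have h := HasCompactSupport.comp_smul (f := unitBump) unitBump.hasCompactSupport
    (c := R⁻¹) (inv_ne_zero hR.ne')
  exact h

theorem abs_cutoff_le_one (x : ℝ) : |cutoff R x| ≤ 1 :=
  (abs_of_nonneg unitBump.nonneg).trans_le unitBump.le_one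

theorem cutoff_eq_one (hR : 0 < R) {x : ℝ} (hx : |x| ≤ R) : cutoff R x = 1 := by
  refine unitBump.one_of_mem_closedBall ?_
  simpa [unitBump, abs_mul, abs_of_pos hR] using inv_mul_le_one_of_le₀ hx hR.le

theorem exists_abs_deriv_cutoff_le : ∃ C : ℝ, ∀ R, 1 ≤ R → ∀ x,
    |deriv (cutoff R) x| ≤ C * R⁻¹ ∧ |deriv (deriv (cutoff R)) x| ≤ C * R⁻¹ := by
  have hb : ∀ j : ℕ, ∃ C, ∀ x, |iteratedDeriv j unitBump x| ≤ C := fun j =>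
    ((unitBump.hasCompactSupport.iteratedFDeriv (𝕜 := ℝ) j).exists_bound_of_continuous
      (unitBump.contDiff.continuous_iteratedFDeriv le_rfl)).imp fun C hC x => by
        simpa [norm_iteratedFDeriv_eq_norm_iteratedDeriv] using hC x
  obtain ⟨C₁, hC₁⟩ := hb 1
  obtain ⟨C₂, hC₂⟩ := hb 2
  have hscale : ∀ R x (j : ℕ), iteratedDeriv j (cutoff R) x
      = R⁻¹ ^ j * iteratedDeriv j unitBump (R⁻¹ * x) := fun R x j =>
    congrFun (iteratedDeriv_comp_const_mul (unitBump.contDiff (n := j)) R⁻¹) x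
  refine ⟨max C₁ C₂, fun R hR x => ?_⟩
  have hR0 : 0 ≤ R⁻¹ := inv_nonneg.2 (by linarith)
  have hR2 : R⁻¹ ^ 2 ≤ R⁻¹ := pow_le_of_le_one hR0 (inv_le_one_of_one_le₀ hR) two_ne_zero
  rw [← iteratedDeriv_one, ← iteratedDeriv_succ, iteratedDeriv_one, mul_comm _ R⁻¹]
  simp only [← iteratedDeriv_one, one_add_one_eq_two]
  rw [hscale, hscale, abs_mul, abs_mul, pow_one, abs_of_nonneg hR0,
    abs_of_nonneg (pow_nonneg hR0 2)]
  exact ⟨mul_le_mul_of_nonneg_left ((hC₁ _).trans (le_max_left _ _)) hR0,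
    mul_le_mul hR2 ((hC₂ _).trans (le_max_right _ _)) (abs_nonneg _) hR0⟩

theorem tendsto_integral_cutoff_mul {f : ℝ → ℝ} (hf : Integrable f) :
    Tendsto (fun R => ∫ x, cutoff R x * f x) atTop (𝓝 (∫ x, f x)) := by
  refine tendsto_integral_filter_of_dominated_convergence (fun x => |f x|) ?_ ?_ hf.abs ?_
  · exact .of_forall fun R =>
      contDiff_cutoff.continuous.aestronglyMeasurable.mul hf.aestronglyMeasurable
  · refine .of_forall fun R => .of_forall fun x => ?_
    rw [norm_eq_abs, abs_mul]
    exact mul_le_of_le_one_left (abs_nonneg _) (abs_cutoff_le_one x)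
  · refine .of_forall fun x => tendsto_const_nhds.congr' ?_
    filter_upwards [eventually_ge_atTop |x|, eventually_gt_atTop 0] with R hx hR
    rw [cutoff_eq_one hR hx, one_mul]

end Cutoff

theorem integrable_mul_of_hasCompactSupport {χ v : ℝ → ℝ} (hχ : Continuous χ)
    (hc : HasCompactSupport χ) (hv : Continuous v) : Integrable fun x => χ x * v x :=
  (hχ.mul hv).integrable_of_hasCompactSupport hc.mul_right

theorem integral_mul_deriv_of_hasCompactSupport {χ v v' : ℝ → ℝ} (hχ : ContDiff ℝ 1 χ)
    (hc : HasCompactSupport χ) (hv : ∀ x, HasDerivAt v (v' x) x) (hv' : Continuous v') :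
    ∫ x, χ x * v' x = -∫ x, deriv χ x * v x := by
  have hvc : Continuous v := continuous_iff_continuousAt.2 fun x => (hv x).continuousAt
  exact integral_mul_deriv_eq_deriv_mul_of_integrable
    (fun x _ => (hχ.differentiable one_ne_zero x).hasDerivAt) (fun x _ => hv x)
    (integrable_mul_of_hasCompactSupport hχ.continuous hc hv')
    (integrable_mul_of_hasCompactSupport (hχ.continuous_deriv le_rfl) hc.deriv hvc)
    (integrable_mul_of_hasCompactSupport hχ.continuous hc hvc)

/-- The balance law `∂ₜe = g + ∂ₓ(q₁ + ∂ₓq₂)` for times in `s`, where `e'` and `q₂'` stand for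
`∂ₜe` and `∂ₓq₂`, with source and fluxes bounded in `L¹` uniformly in time. The flux is split
because for dispersive equations only a primitive `q₂` of its leading part is controlled
in `L¹`. -/
structure BalanceLaw (s : Set ℝ) (e e' g q₁ q₂ q₂' : ℝ → ℝ → ℝ) (B : ℝ) : Prop where
  integrable_density : ∀ t, Integrable (e t)
  continuous_rate : Continuous (Function.uncurry e')
  hasDerivAt_density : ∀ t x, HasDerivAt (fun τ => e τ x) (e' t x) t
  hasDerivAt_flux : ∀ t ∈ s, ∀ x, HasDerivAt (fun x => q₁ t x + q₂' t x) (e' t x - g t x) x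
  hasDerivAt_flux₂ : ∀ t ∈ s, ∀ x, HasDerivAt (q₂ t) (q₂' t x) x
  continuous_flux₂ : ∀ t ∈ s, Continuous (q₂' t)
  source : ∀ t ∈ s, L1Bound (g t) B
  flux₁ : ∃ K, ∀ t ∈ s, L1Bound (q₁ t) K
  flux₂ : ∃ K, ∀ t ∈ s, L1Bound (q₂ t) K

section BalanceLaw

variable {s : Set ℝ} {e e' g q₁ q₂ q₂' : ℝ → ℝ → ℝ} {B : ℝ}

theorem integral_mul_sub_integral_mul {χ : ℝ → ℝ} {c d : ℝ} (hχ : Continuous χ)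
    (hc : HasCompactSupport χ) (he : ∀ t, Integrable (fun x => χ x * e t x))
    (he' : Continuous (Function.uncurry e')) (hderiv : ∀ t x, HasDerivAt (e · x) (e' t x) t) :
    (∫ x, χ x * e d x) - ∫ x, χ x * e c x = ∫ t in c..d, ∫ x, χ x * e' t x := by
  have h_int : Integrable (Function.uncurry fun t x => χ x * e' t x)
      ((volume.restrict (uIoc c d)).prod volume) := by
    have hcont : Continuous (Function.uncurry fun t x => χ x * e' t x) :=
      (hχ.comp continuous_snd).mul he'
    have hcompact := hcont.continuousOn.integrableOn_compact (μ := volume)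
      ((isCompact_uIcc (a := c) (b := d)).prod hc.isCompact)
    rw [Measure.restrict_prod_eq_prod_univ, ← Measure.volume_eq_prod]
    refine IntegrableOn.of_forall_sdiff_eq_zero
      (hcompact.mono_set (prod_mono_left uIoc_subset_uIcc)) ?_ ?_
    · exact measurableSet_uIoc.prod .univ
    · rintro ⟨t, x⟩ ⟨ht, hx⟩
      have : x ∉ tsupport χ := fun h => hx ⟨ht.1, h⟩
      simp [image_eq_zero_of_notMem_tsupport this]
  rw [← integral_sub (he d) (he c), intervalIntegral_integral_swap h_int]
  refine integral_congr_ae (.of_forall fun x => ?_)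
  have hcont : Continuous fun t => e' t x := he'.comp (continuous_id.prodMk continuous_const)
  simp only
  rw [intervalIntegral.integral_const_mul, intervalIntegral.integral_eq_sub_of_hasDerivAt
    (fun t _ => hderiv t x) (hcont.intervalIntegrable _ _), mul_sub]

namespace BalanceLaw

theorem abs_integral_mul_rate_le (h : BalanceLaw s e e' g q₁ q₂ q₂' B) {χ : ℝ → ℝ}
    {δ t K₁ K₂ : ℝ} (hq₁ : L1Bound (q₁ t) K₁) (hq₂ : L1Bound (q₂ t) K₂)
    (hχ : ContDiff ℝ 2 χ) (hc : HasCompactSupport χ) (hχ₀ : ∀ x, |χ x| ≤ 1)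
    (hχ₁ : ∀ x, |deriv χ x| ≤ δ) (hχ₂ : ∀ x, |deriv (deriv χ) x| ≤ δ) (ht : t ∈ s) :
    |∫ x, χ x * e' t x| ≤ B + δ * (K₁ + K₂) := by
  have hχ' : ContDiff ℝ 1 (deriv χ) := ((contDiff_succ_iff_deriv (n := 1)).1 hχ).2.2
  have he' : Continuous (e' t) := h.continuous_rate.comp (continuous_const.prodMk continuous_id)
  have hg := (h.source t ht).bounded_mul hχ.continuous hχ₀
  have hχq₁ := hq₁.bounded_mul hχ'.continuous hχ₁
  have hχq₂ := hq₂.bounded_mul (hχ'.continuous_deriv le_rfl) hχ₂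
  have hflux : ∫ x, χ x * (e' t x - g t x) =
      -(∫ x, deriv χ x * q₁ t x) + ∫ x, deriv (deriv χ) x * q₂ t x := by
    rw [integral_mul_deriv_of_hasCompactSupport (hχ.of_le one_le_two) hc (h.hasDerivAt_flux t ht)
      (he'.sub (h.source t ht).cont)]
    simp_rw [mul_add]
    rw [integral_add hχq₁.int (integrable_mul_of_hasCompactSupport hχ'.continuous hc.deriv
        (h.continuous_flux₂ t ht)),
      integral_mul_deriv_of_hasCompactSupport hχ' hc.deriv (h.hasDerivAt_flux₂ t ht)
        (h.continuous_flux₂ t ht)]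
    ring
  have hsplit : ∫ x, χ x * e' t x = (∫ x, χ x * g t x) + ∫ x, χ x * (e' t x - g t x) := by
    rw [← integral_add hg.int (integrable_mul_of_hasCompactSupport hχ.continuous hc
      (v := fun x => e' t x - g t x) (he'.sub (h.source t ht).cont))]
    simp_rw [← mul_add, add_sub_cancel]
  rw [hsplit, hflux, abs_le]
  have b₀ := abs_le.1 hg.abs_integral_le
  have b₁ := abs_le.1 hχq₁.abs_integral_le
  have b₂ := abs_le.1 hχq₂.abs_integral_le
  constructor <;> linarith [b₀.1, b₀.2, b₁.1, b₁.2, b₂.1, b₂.2]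

theorem abs_integral_sub_le (h : BalanceLaw s e e' g q₁ q₂ q₂' B) (hs : s.OrdConnected)
    {c d : ℝ} (hc : c ∈ s) (hd : d ∈ s) :
    |(∫ x, e d x) - ∫ x, e c x| ≤ B * |d - c| := by
  obtain ⟨C, hC⟩ := exists_abs_deriv_cutoff_le
  obtain ⟨K₁, hK₁⟩ := h.flux₁
  obtain ⟨K₂, hK₂⟩ := h.flux₂
  have hbound : ∀ R, 1 ≤ R → |(∫ x, cutoff R x * e d x) - ∫ x, cutoff R x * e c x| ≤
      (B + C * R⁻¹ * (K₁ + K₂)) * |d - c| := fun R hR => by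
    have hcs := hasCompactSupport_cutoff (zero_lt_one.trans_le hR)
    rw [integral_mul_sub_integral_mul contDiff_cutoff.continuous hcs
      (fun t => (h.integrable_density t).bdd_mul contDiff_cutoff.continuous.aestronglyMeasurable
        (.of_forall abs_cutoff_le_one)) h.continuous_rate h.hasDerivAt_density, ← norm_eq_abs]
    refine intervalIntegral.norm_integral_le_of_norm_le_const fun t ht => ?_
    have hts : t ∈ s := hs.uIcc_subset hc hd (uIoc_subset_uIcc ht)
    exact h.abs_integral_mul_rate_le (hK₁ t hts) (hK₂ t hts)
      (contDiff_infty.1 contDiff_cutoff 2) hcs abs_cutoff_le_one (fun x => (hC R hR x).1)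
      (fun x => (hC R hR x).2) hts
  have hlim : Tendsto (fun R => (B + C * R⁻¹ * (K₁ + K₂)) * |d - c|) atTop
      (𝓝 ((B + C * 0 * (K₁ + K₂)) * |d - c|)) :=
    (((tendsto_inv_atTop_zero.const_mul C).mul_const _).const_add B).mul_const _
  rw [mul_zero, zero_mul, add_zero] at hlim
  exact le_of_tendsto_of_tendsto ((tendsto_integral_cutoff_mul (h.integrable_density d)).sub
    (tendsto_integral_cutoff_mul (h.integrable_density c))).abs hlim
    ((eventually_ge_atTop 1).mono hbound)

end BalanceLaw

end BalanceLaw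

/-! ### Boundedness on real intervals -/

theorem le_two_mul_of_forall_upperBound {ι : Type*} {s : Set ι} {f : ι → ℝ} {A : ℝ}
    (hf : BddAbove (f '' s))
    (absorb : ∀ Y, (∀ r ∈ s, f r ≤ Y) → ∀ r ∈ s, f r ≤ A + Y / 2) :
    ∀ r ∈ s, f r ≤ 2 * A := by
  intro r hr
  have hsup : ∀ r ∈ s, f r ≤ sSup (f '' s) := fun r hr => le_csSup hf ⟨r, hr, rfl⟩
  have : sSup (f '' s) ≤ A + sSup (f '' s) / 2 :=
    csSup_le ⟨f r, r, hr, rfl⟩ (forall_mem_image.2 (absorb _ hsup))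
  linarith [hsup r hr]

theorem bddAbove_image_of_le {ι : Type*} {s : Set ι} {f g : ι → ℝ} (hfg : ∀ r ∈ s, f r ≤ g r)
    (hg : BddAbove (g '' s)) : BddAbove (f '' s) := by
  obtain ⟨X, hX⟩ := hg
  exact ⟨X, forall_mem_image.2 fun r hr => (hfg r hr).trans (hX ⟨r, hr, rfl⟩)⟩

theorem bddAbove_image_of_isBoundedUnder {K s : Set ℝ} {ρ : ℝ → ℝ} (hs : IsCompact s)
    (hsK : s ⊆ K) (h : ∀ t ∈ s, IsBoundedUnder (· ≤ ·) (𝓝[K] t) ρ) : BddAbove (ρ '' s) := by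
  refine hs.induction_on (p := fun u => BddAbove (ρ '' u)) (by simp)
    (fun _ _ hst => BddAbove.mono (image_mono hst))
    (fun _ _ hu hv => by rw [image_union]; exact hu.union hv) fun t ht => ?_
  obtain ⟨M, hM⟩ := h t ht
  exact ⟨{r | ρ r ≤ M}, nhdsWithin_mono t hsK (eventually_map.1 hM), M,
    forall_mem_image.2 fun _ => id⟩

theorem isClosed_setOf_not_isBoundedUnder {K : Set ℝ} (hK : IsClosed K) (ρ : ℝ → ℝ) :
    IsClosed {t ∈ K | ¬ IsBoundedUnder (· ≤ ·) (𝓝[K] t) ρ} := by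
  refine hK.inter (s₂ := {t | ¬ IsBoundedUnder (· ≤ ·) (𝓝[K] t) ρ}) ?_
  rw [← isOpen_compl_iff, isOpen_iff_eventually]
  intro t ht
  simp only [mem_compl_iff, mem_ofPred_eq, not_not] at ht ⊢
  obtain ⟨M, hM⟩ := ht
  rw [eventually_map, ← eventually_nhds_nhdsWithin] at hM
  exact hM.mono fun r hr => ⟨M, eventually_map.2 hr⟩

theorem exists_ball_forall_le_of_isClosed_sublevel {B : Set ℝ} (hB : IsClosed B)
    (hne : B.Nonempty) {ρ : ℝ → ℝ} (hρ : ∀ n : ℕ, IsClosed {t ∈ B | ρ t ≤ n}) :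
    ∃ b ∈ B, ∃ δ > 0, ∃ n : ℕ, ∀ a ∈ B, |a - b| < δ → ρ a ≤ n := by
  have : CompleteSpace B := hB.completeSpace_coe
  have : Nonempty B := hne.to_subtype
  have hclosed (n : ℕ) : IsClosed {x : B | ρ x ≤ n} := by
    convert (hρ n).preimage (continuous_subtype_val (p := fun x => x ∈ B)) using 1
    ext x
    exact ⟨fun h => ⟨x.2, h⟩, fun h => h.2⟩
  have hcover : ⋃ n : ℕ, {x : B | ρ x ≤ n} = univ :=
    eq_univ_of_forall fun x => mem_iUnion.2 (exists_nat_ge (ρ x))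
  obtain ⟨n, b, hb⟩ := nonempty_interior_of_iUnion_of_closed hclosed hcover
  obtain ⟨δ, hδ, hball⟩ := Metric.mem_nhds_iff.1 (mem_interior_iff_mem_nhds.1 hb)
  exact ⟨b, b.2, δ, hδ, n, fun a ha hab => @hball ⟨a, ha⟩ hab⟩

theorem exists_mem_uIcc_disjoint_uIcc_diff_singleton {B : Set ℝ} (hB : IsClosed B) {b : ℝ}
    (hb : b ∈ B) (t : ℝ) : ∃ a ∈ B, a ∈ uIcc b t ∧ Disjoint (uIcc a t \ {a}) B := by
  obtain ⟨a, ⟨haB, hab⟩, hmin⟩ := (isCompact_uIcc.inter_left hB).exists_isMinOn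
    (f := fun x => |t - x|) ⟨b, hb, left_mem_uIcc⟩ (by fun_prop)
  refine ⟨a, haB, hab, disjoint_left.2 fun r hr hrB => hr.2 ?_⟩
  have har : |t - a| ≤ |t - r| := hmin ⟨hrB, uIcc_subset_uIcc hab right_mem_uIcc hr.1⟩
  have hra : |t - r| = |t - a| := (abs_sub_right_of_mem_uIcc hr.1).antisymm har
  rcases mem_uIcc.1 hr.1 with h | h
  · rw [abs_of_nonneg (by linarith), abs_of_nonneg (by linarith)] at hra
    exact sub_right_injective hra
  · rw [abs_of_nonpos (by linarith), abs_of_nonpos (by linarith)] at hra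
    exact sub_right_injective (neg_injective hra)

theorem ordConnected_uIcc_diff_singleton (a t : ℝ) : (uIcc a t \ {a}).OrdConnected := by
  rcases le_total a t with h | h
  · rw [uIcc_of_le h, Icc_sdiff_left]
    exact ordConnected_Ioc
  · rw [uIcc_of_ge h, Icc_sdiff_right]
    exact ordConnected_Ico

-- By Baire, `ρ` is bounded on a relatively open piece of the closed set of its singular times;
-- between such times `gap` applies, starting from the nearest singular one.
theorem bddAbove_image_of_gap {K : Set ℝ} (hK : IsCompact K) (hK' : K.OrdConnected) {ρ : ℝ → ℝ}
    (hρ : ∀ n : ℕ, IsClosed {t ∈ K | ρ t ≤ n})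
    (gap : ∀ n : ℕ, ∃ τ > 0, ∃ M, ∀ a ∈ K, ∀ t ∈ K, ρ a ≤ n → |t - a| ≤ τ →
      (∀ c ∈ uIcc a t \ {a}, ∀ d ∈ uIcc a t \ {a}, BddAbove (ρ '' uIcc c d)) → ρ t ≤ M) :
    BddAbove (ρ '' K) := by
  set B : Set ℝ := {t ∈ K | ¬ IsBoundedUnder (· ≤ ·) (𝓝[K] t) ρ}
  have hB : IsClosed B := isClosed_setOf_not_isBoundedUnder hK.isClosed ρ
  have bddAbove_of_disjoint {s : Set ℝ} (hs : IsCompact s) (hsK : s ⊆ K) (hsB : Disjoint s B) :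
      BddAbove (ρ '' s) :=
    bddAbove_image_of_isBoundedUnder hs hsK fun t ht => by
      by_contra hcon
      exact disjoint_left.1 hsB ht ⟨hsK ht, hcon⟩
  rcases B.eq_empty_or_nonempty with hempty | hne
  · exact bddAbove_of_disjoint hK subset_rfl (hempty ▸ disjoint_empty K)
  have hρB (n : ℕ) : IsClosed {t ∈ B | ρ t ≤ n} := by
    convert hB.inter (hρ n) using 1
    ext t
    exact ⟨fun h => ⟨h.1, h.1.1, h.2⟩, fun h => ⟨h.1, h.2.2⟩⟩
  obtain ⟨b, hbB, δ, hδ, n, hn⟩ := exists_ball_forall_le_of_isClosed_sublevel hB hne hρB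
  obtain ⟨τ, hτ, M, hM⟩ := gap n
  refine absurd ⟨M, eventually_map.2 ?_⟩ hbB.2
  filter_upwards [self_mem_nhdsWithin,
    mem_nhdsWithin_of_mem_nhds (Metric.ball_mem_nhds b (lt_min hδ hτ))] with t ht htb
  obtain ⟨hδt, hτt⟩ := lt_min_iff.1 (Metric.mem_ball.1 htb)
  obtain ⟨a, haB, hab, hdisj⟩ := exists_mem_uIcc_disjoint_uIcc_diff_singleton hB hbB t
  refine hM a haB.1 t ht (hn a haB ((abs_sub_left_of_mem_uIcc hab).trans_lt hδt))
    ((abs_sub_right_of_mem_uIcc hab).trans hτt.le) fun c hc d hd => ?_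
  have hcd : uIcc c d ⊆ uIcc a t \ {a} :=
    (ordConnected_uIcc_diff_singleton a t).uIcc_subset hc hd
  exact bddAbove_of_disjoint isCompact_uIcc
    (hcd.trans (sdiff_subset.trans (hK'.uIcc_subset haB.1 ht))) (hdisj.mono_left hcd)

theorem exists_mem_uIcc_mul_abs_sub_le_half {a t A : ℝ} (hA : 0 ≤ A) (hat : t ≠ a) :
    ∃ p ∈ uIcc a t, p ≠ a ∧ A * |p - a| ≤ 1 / 2 := by
  set ϑ : ℝ := (1 + 2 * (A * |t - a|))⁻¹ with hϑ
  have hpos : 0 < 1 + 2 * (A * |t - a|) := by positivity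
  have hϑ0 : 0 < ϑ := inv_pos.2 hpos
  have hϑ1 : ϑ ≤ 1 := inv_le_one_of_one_le₀ (by have := abs_nonneg (t - a); nlinarith)
  refine ⟨a + ϑ * (t - a), ?_, ?_, ?_⟩
  · rw [← segment_eq_uIcc]
    exact ⟨1 - ϑ, ϑ, by linarith, hϑ0.le, by ring, by simp only [smul_eq_mul]; ring⟩
  · simp [hϑ0.ne', sub_ne_zero.2 hat]
  · rw [add_sub_cancel_left, abs_mul, abs_of_pos hϑ0, mul_left_comm, hϑ, inv_mul_le_iff₀ hpos]
    linarith

/-- A Grönwall inequality on the interval from `a` to `t` with the endpoint `a` removed: `y` stays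
bounded up to `a` if it differs boundedly from a quantity `e` of growth rate `A * (1 + y)`. -/
theorem bddAbove_image_uIcc_diff_singleton {y e : ℝ → ℝ} {a t A : ℝ} (hy : ∀ r, 0 ≤ y r)
    (hb : ∀ c ∈ uIcc a t \ {a}, ∀ d ∈ uIcc a t \ {a}, BddAbove (y '' uIcc c d))
    (he : ∀ c ∈ uIcc a t \ {a}, ∀ d ∈ uIcc a t \ {a}, ∀ Y, (∀ r ∈ uIcc c d, y r ≤ Y) →
      |e d - e c| ≤ A * (1 + Y) * |d - c|)
    (hye : ∀ r ∈ uIcc a t \ {a}, |y r - e r| ≤ A) : BddAbove (y '' (uIcc a t \ {a})) := by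
  rcases eq_or_ne t a with rfl | hta
  · simp
  have hA : 0 ≤ A := (abs_nonneg _).trans (hye t ⟨right_mem_uIcc, hta⟩)
  obtain ⟨p, hp, hpa, hAp⟩ := exists_mem_uIcc_mul_abs_sub_le_half hA hta
  have near (r : ℝ) (hr : r ∈ uIcc a p) (hra : r ≠ a) : y r ≤ 2 * (y p + 2 * A + 1 / 2) := by
    have hrI : r ∈ uIcc a t \ {a} := ⟨uIcc_subset_uIcc left_mem_uIcc hp hr, hra⟩
    have hrp : uIcc r p ⊆ uIcc a t \ {a} :=
      (ordConnected_uIcc_diff_singleton a t).uIcc_subset hrI ⟨hp, hpa⟩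
    refine le_two_mul_of_forall_upperBound (hb r hrI p ⟨hp, hpa⟩) (fun Y hY q hq => ?_)
      r left_mem_uIcc
    have growth := he p ⟨hp, hpa⟩ q (hrp hq) Y fun x hx =>
      hY x (uIcc_subset_uIcc right_mem_uIcc hq hx)
    have hqp : A * |q - p| ≤ 1 / 2 :=
      (mul_le_mul_of_nonneg_left ((abs_sub_comm q p).trans_le
        (abs_sub_right_of_mem_uIcc (uIcc_subset_uIcc hr right_mem_uIcc hq))) hA).trans hAp
    have hY0 : 0 ≤ Y := (hy r).trans (hY r left_mem_uIcc)
    have hgrow : A * (1 + Y) * |q - p| ≤ 1 / 2 + Y / 2 := by nlinarith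
    have hq_close := abs_le.1 (hye q (hrp hq))
    have hp_close := abs_le.1 (hye p ⟨hp, hpa⟩)
    linarith [(abs_le.1 growth).2]
  refine ((hb p ⟨hp, hpa⟩ t ⟨right_mem_uIcc, hta⟩).union ⟨2 * (y p + 2 * A + 1 / 2),
    forall_mem_image.2 fun r (hr : r ∈ uIcc a p \ {a}) => near r hr.1 hr.2⟩).mono ?_
  rw [← image_union]
  refine image_mono fun r hr => ?_
  rcases uIcc_subset_uIcc_union_uIcc (b := p) hr.1 with h | h
  · exact Or.inr ⟨h, hr.2⟩
  · exact Or.inl h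

theorem lt_of_forall_abs_sub_le {y G : ℝ → ℝ} {a t M : ℝ} (hG : ∀ Y, 0 ≤ G Y)
    (hb : BddAbove (y '' uIcc a t))
    (lip : ∀ Y, ∀ c ∈ uIcc a t, ∀ d ∈ uIcc a t, (∀ r ∈ uIcc c d, y r ≤ Y) →
      |y d - y c| ≤ G Y * |d - c|)
    (hM : y a + G M * |t - a| < M) : ∀ r ∈ uIcc a t, y r < M := by
  obtain ⟨Y, hY⟩ := hb
  have hcont : ContinuousOn y (uIcc a t) :=
    LipschitzOnWith.continuousOn (K := (G Y).toNNReal) <| LipschitzOnWith.of_dist_le_mul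
      fun d hd c hc => by
        rw [Real.coe_toNNReal _ (hG Y)]
        exact lip Y c hc d hd fun r hr => hY ⟨r, uIcc_subset_uIcc hc hd hr, rfl⟩
  have hya : y a < M := by nlinarith [hG M, abs_nonneg (t - a)]
  by_contra! ⟨r, hr, hMr⟩
  have hclosed : IsClosed (uIcc a t ∩ y ⁻¹' Ici M) :=
    hcont.preimage_isClosed_of_isClosed isClosed_Icc isClosed_Ici
  obtain ⟨θ, ⟨hθ, hMθ⟩, -, hfirst⟩ :=
    exists_mem_uIcc_disjoint_uIcc_diff_singleton hclosed ⟨hr, hMr⟩ a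
  have before (c : ℝ) (hc : c ∈ uIcc a θ) (hcθ : c ≠ θ) : y c < M := not_le.1 fun h =>
    disjoint_left.1 hfirst ⟨by rwa [uIcc_comm], hcθ⟩
      ⟨uIcc_subset_uIcc left_mem_uIcc hθ hc, h⟩
  have hyθ : y θ = M := by
    obtain ⟨c, hc, hcM⟩ := intermediate_value_uIcc
      (hcont.mono (uIcc_subset_uIcc left_mem_uIcc hθ)) (mem_uIcc_of_le hya.le hMθ)
    rcases eq_or_ne c θ with rfl | hcθ
    · exact hcM
    · exact absurd hcM (before c hc hcθ).ne
  have hbelow : ∀ c ∈ uIcc a θ, y c ≤ M := fun c hc => by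
    rcases eq_or_ne c θ with rfl | hcθ
    · exact hyθ.le
    · exact (before c hc hcθ).le
  have hrise := lip M a left_mem_uIcc θ hθ hbelow
  have hlen : G M * |θ - a| ≤ G M * |t - a| :=
    mul_le_mul_of_nonneg_left (abs_sub_left_of_mem_uIcc hθ) (hG M)
  linarith [le_abs_self (y θ - y a)]

/-! ### Mixed partial derivatives -/

section PartialDerivatives

variable {f : ℝ → ℝ → ℝ}

theorem hasDerivAt_fderiv_left (hf : ContDiff ℝ ∞ (Function.uncurry f)) (t x : ℝ) :
    HasDerivAt (fun τ => f τ x) (fderiv ℝ (Function.uncurry f) (t, x) (1, 0)) t :=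
  ((hf.differentiable (by simp) (t, x)).hasFDerivAt.comp_hasDerivAt t
    ((hasDerivAt_id t).prodMk (hasDerivAt_const t x)) :)

theorem hasDerivAt_fderiv_right (hf : ContDiff ℝ ∞ (Function.uncurry f)) (t x : ℝ) :
    HasDerivAt (f t) (fderiv ℝ (Function.uncurry f) (t, x) (0, 1)) x :=
  ((hf.differentiable (by simp) (t, x)).hasFDerivAt.comp_hasDerivAt x
    ((hasDerivAt_const x t).prodMk (hasDerivAt_id x)) :)

theorem contDiff_fderiv_apply {F : ℝ × ℝ → ℝ} (hF : ContDiff ℝ ∞ F) (v : ℝ × ℝ) :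
    ContDiff ℝ ∞ (fun p => fderiv ℝ F p v) :=
  (hF.fderiv_right (m := ∞) (by simp)).clm_apply contDiff_const

theorem fderiv_fderiv_apply_comm {F : ℝ × ℝ → ℝ} (hF : ContDiff ℝ ∞ F) (p v w : ℝ × ℝ) :
    fderiv ℝ (fun q => fderiv ℝ F q v) p w = fderiv ℝ (fun q => fderiv ℝ F q w) p v := by
  have hd : DifferentiableAt ℝ (fderiv ℝ F) p :=
    (hF.fderiv_right (m := ∞) (by simp)).differentiable (by simp) p
  have fderiv_apply (v w : ℝ × ℝ) :
      fderiv ℝ (fun q => fderiv ℝ F q v) p w = fderiv ℝ (fderiv ℝ F) p w v := by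
    simp [(hd.hasFDerivAt.clm_apply (hasFDerivAt_const v p)).fderiv]
  have hsymm : IsSymmSndFDerivAt ℝ F p := hF.contDiffAt.isSymmSndFDerivAt
    (by simp only [minSmoothness_of_isRCLikeNormedField]; exact WithTop.coe_le_coe.2 le_top)
  rw [fderiv_apply, fderiv_apply, hsymm.eq]

theorem continuous_deriv_left (hf : ContDiff ℝ ∞ (Function.uncurry f)) :
    Continuous (Function.uncurry fun t x => deriv (fun τ => f τ x) t) := by
  refine (contDiff_fderiv_apply hf (1, 0)).continuous.congr fun p => ?_
  exact (hasDerivAt_fderiv_left hf p.1 p.2).deriv.symm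

theorem contDiff_of_hasDerivAt_right {f' : ℝ → ℝ → ℝ} (hf : ContDiff ℝ ∞ (Function.uncurry f))
    (hf' : ∀ t x, HasDerivAt (f t) (f' t x) x) : ContDiff ℝ ∞ (Function.uncurry f') := by
  convert contDiff_fderiv_apply hf (0, 1) using 1
  ext p
  exact (hf' p.1 p.2).unique (hasDerivAt_fderiv_right hf p.1 p.2)

theorem hasDerivAt_deriv_left {f' : ℝ → ℝ → ℝ} (hf : ContDiff ℝ ∞ (Function.uncurry f))
    (hf' : ∀ t x, HasDerivAt (f t) (f' t x) x) (t x : ℝ) :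
    HasDerivAt (fun x => deriv (fun τ => f τ x) t) (deriv (fun τ => f' τ x) t) x := by
  have hleft : (fun x => deriv (fun τ => f τ x) t) =
      fun x => fderiv ℝ (Function.uncurry f) (t, x) (1, 0) :=
    funext fun x => (hasDerivAt_fderiv_left hf t x).deriv
  have hright : Function.uncurry f' = fun p => fderiv ℝ (Function.uncurry f) p (0, 1) :=
    funext fun p => (hf' p.1 p.2).unique (hasDerivAt_fderiv_right hf p.1 p.2)
  rw [hleft, (hasDerivAt_fderiv_left (contDiff_of_hasDerivAt_right hf hf') t x).deriv, hright,
    ← fderiv_fderiv_apply_comm hf]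
  exact hasDerivAt_fderiv_right (f := fun t x => fderiv ℝ (Function.uncurry f) (t, x) (1, 0))
    (contDiff_fderiv_apply hf (1, 0)) t x

end PartialDerivatives

/-! ### Sobolev norms of Schwartz functions -/

/-- The squared homogeneous Sobolev norm `‖∂^m f‖²` in `L²`. -/
noncomputable def homSobolevSq (m : ℕ) (f : SchwartzMap ℝ ℝ) : ℝ :=
  ∫ x, iteratedDeriv m f x ^ 2

/-- The squared Sobolev norm `‖f‖²` in `H^M`. -/
noncomputable def sobolevSq (M : ℕ) (f : SchwartzMap ℝ ℝ) : ℝ :=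
  ∑ m ∈ Finset.range (M + 1), homSobolevSq m f

theorem hasDerivAt_iteratedDeriv_of_contDiff {f : ℝ → ℝ} (hf : ContDiff ℝ ∞ f) (m : ℕ) (x : ℝ) :
    HasDerivAt (iteratedDeriv m f) (iteratedDeriv (m + 1) f x) x := by
  rw [iteratedDeriv_succ]
  exact (hf.differentiable_iteratedDeriv m
    (by exact_mod_cast ENat.natCast_lt_top m) x).hasDerivAt

section SchwartzMap

variable (f : SchwartzMap ℝ ℝ)

theorem homSobolevSq_nonneg (m : ℕ) : 0 ≤ homSobolevSq m f :=
  integral_nonneg fun _ => sq_nonneg _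

theorem sobolevSq_nonneg (M : ℕ) : 0 ≤ sobolevSq M f :=
  Finset.sum_nonneg fun m _ => homSobolevSq_nonneg f m

theorem sobolevSq_succ (M : ℕ) :
    sobolevSq (M + 1) f = sobolevSq M f + homSobolevSq (M + 1) f :=
  Finset.sum_range_succ ..

theorem sobolevSq_mono {M N : ℕ} (h : M ≤ N) : sobolevSq M f ≤ sobolevSq N f :=
  Finset.sum_le_sum_of_subset_of_nonneg
    (Finset.range_subset_range.2 (Nat.succ_le_succ h)) fun m _ _ => homSobolevSq_nonneg f m

theorem homSobolevSq_le_sobolevSq {m M : ℕ} (h : m ≤ M) : homSobolevSq m f ≤ sobolevSq M f :=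
  Finset.single_le_sum (fun m _ => homSobolevSq_nonneg f m)
    (Finset.mem_range.2 (Nat.lt_succ_of_le h))

theorem hasDerivAt_iteratedDeriv (m : ℕ) (x : ℝ) :
    HasDerivAt (iteratedDeriv m f) (iteratedDeriv (m + 1) f x) x :=
  hasDerivAt_iteratedDeriv_of_contDiff (f.smooth ⊤) m x

theorem continuous_iteratedDeriv (m : ℕ) : Continuous (iteratedDeriv m f) :=
  continuous_iff_continuousAt.2 fun x => (hasDerivAt_iteratedDeriv f m x).continuousAt

theorem exists_schwartzMap_eq_iteratedDeriv (m : ℕ) :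
    ∃ g : SchwartzMap ℝ ℝ, ⇑g = iteratedDeriv m f := by
  induction m with
  | zero => exact ⟨f, by simp⟩
  | succ m ih =>
    obtain ⟨g, hg⟩ := ih
    exact ⟨SchwartzMap.derivCLM ℝ ℝ g, by
      ext x
      rw [SchwartzMap.derivCLM_apply, iteratedDeriv_succ, hg]⟩

theorem l2SqBound_iteratedDeriv (m : ℕ) :
    L2SqBound (iteratedDeriv m f) (homSobolevSq m f) := by
  obtain ⟨g, hg⟩ := exists_schwartzMap_eq_iteratedDeriv f m
  exact ⟨continuous_iteratedDeriv f m, hg ▸ (g.memLp 2 volume).integrable_sq, le_rfl⟩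

theorem sq_iteratedDeriv_le_mul_add {l : ℝ} (hl : 0 < l) (m : ℕ) (x : ℝ) :
    iteratedDeriv m f x ^ 2 ≤ l * homSobolevSq m f + l⁻¹ * homSobolevSq (m + 1) f :=
  (l2SqBound_iteratedDeriv f m).sq_apply_le (hasDerivAt_iteratedDeriv f m)
    (l2SqBound_iteratedDeriv f (m + 1)) hl x

theorem sq_iteratedDeriv_le {m M : ℕ} (h : m + 1 ≤ M) (x : ℝ) :
    iteratedDeriv m f x ^ 2 ≤ sobolevSq M f := by
  have hm := sq_iteratedDeriv_le_mul_add f one_pos m x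
  rw [inv_one, one_mul, one_mul] at hm
  linarith [sobolevSq_mono f h, sobolevSq_succ f m, homSobolevSq_le_sobolevSq f (le_refl m)]

theorem hNorm_nonneg (M : ℕ) (g : ℝ → ℝ) : 0 ≤ hNorm M g := Real.sqrt_nonneg _

theorem hNorm_sq (M : ℕ) : hNorm M f ^ 2 = sobolevSq M f :=
  Real.sq_sqrt (sobolevSq_nonneg f M)

theorem abs_apply_le_hNorm {M : ℕ} (hM : 1 ≤ M) (x : ℝ) : |f x| ≤ hNorm M f := by
  refine abs_le_of_sq_le_sq ?_ (hNorm_nonneg M f)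
  simpa only [hNorm_sq, iteratedDeriv_zero] using sq_iteratedDeriv_le f (m := 0) hM x

theorem linfNorm_le_hNorm {M : ℕ} (hM : 1 ≤ M) : linfNorm f ≤ hNorm M f :=
  ciSup_le (abs_apply_le_hNorm f hM)

theorem abs_apply_le_linfNorm (x : ℝ) : |f x| ≤ linfNorm f :=
  le_ciSup (f := fun x => |f x|)
    ⟨hNorm 1 f, forall_mem_range.2 (abs_apply_le_hNorm f le_rfl)⟩ x

theorem hNorm_pos {f : SchwartzMap ℝ ℝ} (hf : f ≠ 0) {M : ℕ} (hM : 1 ≤ M) : 0 < hNorm M f := by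
  obtain ⟨x, hx⟩ := DFunLike.ne_iff.1 hf
  exact (abs_pos.2 hx).trans_le (abs_apply_le_hNorm f hM x)

end SchwartzMap

/-! ### Smooth families of Schwartz functions -/

/-- The time derivative `∂ₜ ∂ₓ^m U` of a one-parameter family of functions. -/
noncomputable def timeDeriv (U : ℝ → SchwartzMap ℝ ℝ) (m : ℕ) (t x : ℝ) : ℝ :=
  deriv (fun τ => iteratedDeriv m (U τ) x) t

section SmoothFamily

variable {U : ℝ → SchwartzMap ℝ ℝ} (hU : ContDiff ℝ ∞ (fun p : ℝ × ℝ => U p.1 p.2))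
include hU

theorem contDiff_uncurry_iteratedDeriv (m : ℕ) :
    ContDiff ℝ ∞ (Function.uncurry fun t x => iteratedDeriv m (U t) x) := by
  induction m with
  | zero => simpa only [iteratedDeriv_zero, Function.uncurry_def] using hU
  | succ m ih =>
    exact contDiff_of_hasDerivAt_right ih fun t => hasDerivAt_iteratedDeriv (U t) m

theorem hasDerivAt_timeDeriv (m : ℕ) (t x : ℝ) :
    HasDerivAt (fun τ => iteratedDeriv m (U τ) x) (timeDeriv U m t x) t :=
  (hasDerivAt_fderiv_left (contDiff_uncurry_iteratedDeriv hU m) t x).differentiableAt.hasDerivAt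

theorem continuous_timeDeriv (m : ℕ) : Continuous (Function.uncurry (timeDeriv U m)) :=
  continuous_deriv_left (contDiff_uncurry_iteratedDeriv hU m)

theorem hasDerivAt_timeDeriv_right (m : ℕ) (t x : ℝ) :
    HasDerivAt (timeDeriv U m t) (timeDeriv U (m + 1) t x) x :=
  hasDerivAt_deriv_left (contDiff_uncurry_iteratedDeriv hU m)
    (fun t => hasDerivAt_iteratedDeriv (U t) m) t x

-- Only lower semicontinuity in time is available: the tails in `x` need not be uniform in `t`.
theorem isClosed_setOf_sobolevSq_le (M : ℕ) (c : ℝ) : IsClosed {t | sobolevSq M (U t) ≤ c} := by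
  have exhaust : {t | sobolevSq M (U t) ≤ c} = ⋂ R : ℕ, {t | ∑ m ∈ Finset.range (M + 1),
      ∫ x in (-(R : ℝ))..R, iteratedDeriv m (U t) x ^ 2 ≤ c} := by
    ext t
    simp only [mem_ofPred_eq, mem_iInter]
    refine ⟨fun h R => le_trans (Finset.sum_le_sum fun m _ => ?_) h, fun h =>
      le_of_tendsto' (x := atTop) (tendsto_finsetSum _ fun m _ => ?_) h⟩
    · rw [intervalIntegral.integral_of_le (by linarith [Nat.cast_nonneg (α := ℝ) R])]
      exact setIntegral_le_integral (l2SqBound_iteratedDeriv (U t) m).int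
        (Eventually.of_forall fun _ => sq_nonneg _)
    · exact intervalIntegral_tendsto_integral (l2SqBound_iteratedDeriv (U t) m).int
        (tendsto_neg_atTop_atBot.comp tendsto_natCast_atTop_atTop) tendsto_natCast_atTop_atTop
  rw [exhaust]
  refine isClosed_iInter fun R => isClosed_le (continuous_finsetSum _ fun m _ => ?_)
    continuous_const
  exact intervalIntegral.continuous_parametric_intervalIntegral_of_continuous'
    ((contDiff_uncurry_iteratedDeriv hU m).continuous.pow 2) _ _

end SmoothFamily

/-! ### Differential polynomials -/

/-- The operator `f ↦ ∂^i f`, as an element of the ring of maps into functions. -/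
noncomputable abbrev derivOp (i : ℕ) (f : SchwartzMap ℝ ℝ) : ℝ → ℝ := iteratedDeriv i f

/-- The monomial `∏ ∂^i f` over the orders `i ∈ l`. -/
noncomputable def diffMonomial (l : Multiset ℕ) : SchwartzMap ℝ ℝ → ℝ → ℝ :=
  (l.map derivOp).prod

/-- The differential polynomials that are homogeneous of degree `d`, of total order `w`, and
involve no derivative of order above `m`. -/
noncomputable def diffPoly (d w m : ℕ) : Submodule ℝ (SchwartzMap ℝ ℝ → ℝ → ℝ) :=
  Submodule.span ℝ (diffMonomial '' {l | l.card = d ∧ l.sum = w ∧ ∀ i ∈ l, i ≤ m})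

section DiffPoly

theorem diffMonomial_cons (a : ℕ) (l : Multiset ℕ) :
    diffMonomial (a ::ₘ l) = derivOp a * diffMonomial l := by
  simp only [diffMonomial, Multiset.map_cons, Multiset.prod_cons]

theorem diffMonomial_mem_diffPoly {l : Multiset ℕ} {m : ℕ} (hl : ∀ i ∈ l, i ≤ m) :
    diffMonomial l ∈ diffPoly l.card l.sum m :=
  Submodule.subset_span ⟨l, ⟨rfl, rfl, hl⟩, rfl⟩

theorem iteratedDeriv_mul_mem_diffPoly {a d w m : ℕ} (ha : a ≤ m)
    {Q : SchwartzMap ℝ ℝ → ℝ → ℝ} (hQ : Q ∈ diffPoly d w m) :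
    derivOp a * Q ∈ diffPoly (d + 1) (a + w) m := by
  refine Submodule.span_induction
    (p := fun Q _ => derivOp a * Q ∈ diffPoly (d + 1) (a + w) m) ?_ ?_ ?_ ?_ hQ
  · rintro _ ⟨l, ⟨rfl, rfl, hl⟩, rfl⟩
    rw [← diffMonomial_cons]
    exact Submodule.subset_span
      ⟨a ::ₘ l, ⟨l.card_cons a, l.sum_cons a, Multiset.forall_mem_cons.2 ⟨ha, hl⟩⟩, rfl⟩
  · rw [mul_zero]
    exact zero_mem _
  · intro Q R _ _ hQ hR
    rw [mul_add]
    exact add_mem hQ hR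
  · intro c Q _ hQ
    rw [mul_smul_comm]
    exact Submodule.smul_mem _ c hQ

theorem exists_deriv_diffMonomial (l : Multiset ℕ) {m : ℕ} (hl : ∀ i ∈ l, i ≤ m) :
    ∃ Q ∈ diffPoly l.card (l.sum + 1) (m + 1),
      ∀ f x, HasDerivAt (diffMonomial l f) (Q f x) x := by
  induction l using Multiset.induction_on with
  | empty => exact ⟨0, zero_mem _, fun _ x => hasDerivAt_const x (1 : ℝ)⟩
  | cons a l ih =>
    obtain ⟨ha, hl⟩ := Multiset.forall_mem_cons.1 hl
    obtain ⟨Q, hQ, hderiv⟩ := ih hl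
    refine ⟨diffMonomial ((a + 1) ::ₘ l) + derivOp a * Q, add_mem ?_ ?_,
      fun f x => ?_⟩
    · convert diffMonomial_mem_diffPoly (l := (a + 1) ::ₘ l) (m := m + 1)
        (Multiset.forall_mem_cons.2 ⟨by omega, fun i hi => (hl i hi).trans m.le_succ⟩) using 2
      · simp only [Multiset.card_cons]
      · simp only [Multiset.sum_cons]; ring
    · convert iteratedDeriv_mul_mem_diffPoly (ha.trans m.le_succ) hQ using 2
      · rw [Multiset.card_cons]
      · simp only [Multiset.sum_cons]; ring
    · simp only [diffMonomial_cons, Pi.add_apply, Pi.mul_apply]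
      exact (hasDerivAt_iteratedDeriv f a x).mul (hderiv f x)

theorem exists_deriv_of_mem_diffPoly {d w m : ℕ} {Q : SchwartzMap ℝ ℝ → ℝ → ℝ}
    (hQ : Q ∈ diffPoly d w m) :
    ∃ Q' ∈ diffPoly d (w + 1) (m + 1), ∀ f x, HasDerivAt (Q f) (Q' f x) x := by
  refine Submodule.span_induction (p := fun Q _ => ∃ Q' ∈ diffPoly d (w + 1) (m + 1),
    ∀ f x, HasDerivAt (Q f) (Q' f x) x) ?_ ?_ ?_ ?_ hQ
  · rintro _ ⟨l, ⟨rfl, rfl, hl⟩, rfl⟩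
    exact exists_deriv_diffMonomial l hl
  · exact ⟨0, zero_mem _, fun _ x => hasDerivAt_const x (0 : ℝ)⟩
  · rintro Q R _ _ ⟨Q', hQ', hQd⟩ ⟨R', hR', hRd⟩
    exact ⟨Q' + R', add_mem hQ' hR', fun f x => (hQd f x).add (hRd f x)⟩
  · rintro c Q _ ⟨Q', hQ', hQd⟩
    exact ⟨c • Q', Submodule.smul_mem _ c hQ', fun f x => (hQd f x).const_smul c⟩

theorem exists_l2SqBound_of_mem_diffPoly {d w m : ℕ} {X : SchwartzMap ℝ ℝ → ℝ}
    (hX : ∀ l : Multiset ℕ, l.card = d → l.sum = w → (∀ i ∈ l, i ≤ m) →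
      ∀ f, L2SqBound (diffMonomial l f) (X f))
    {Q : SchwartzMap ℝ ℝ → ℝ → ℝ} (hQ : Q ∈ diffPoly d w m) :
    ∃ C, 0 ≤ C ∧ ∀ f, L2SqBound (Q f) (C * X f) := by
  refine Submodule.span_induction
    (p := fun Q _ => ∃ C, 0 ≤ C ∧ ∀ f, L2SqBound (Q f) (C * X f)) ?_ ?_ ?_ ?_ hQ
  · rintro _ ⟨l, ⟨hd, hw, hl⟩, rfl⟩
    exact ⟨1, one_pos.le, fun f => (one_mul (X f)).symm ▸ hX l hd hw hl f⟩
  · exact ⟨0, le_rfl, fun f => ⟨continuous_const, by simp, by simp⟩⟩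
  · rintro Q R _ _ ⟨C, hC, hQb⟩ ⟨D, hD, hRb⟩
    exact ⟨2 * C + 2 * D, by positivity, fun f =>
      ((hQb f).add (hRb f)).mono (by rw [add_mul, mul_assoc, mul_assoc])⟩
  · rintro c Q _ ⟨C, hC, hQb⟩
    exact ⟨c ^ 2 * C, by positivity, fun f => ((hQb f).const_mul c).mono (mul_assoc ..).ge⟩

variable (f : SchwartzMap ℝ ℝ)

theorem continuous_diffMonomial (l : Multiset ℕ) : Continuous (diffMonomial l f) := by
  induction l using Multiset.induction_on with
  | empty => exact continuous_const
  | cons a l ih =>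
    rw [diffMonomial_cons]
    exact (continuous_iteratedDeriv f a).mul ih

theorem sq_diffMonomial_le {l : Multiset ℕ} {M : ℕ} (hl : ∀ i ∈ l, i + 1 ≤ M) (x : ℝ) :
    diffMonomial l f x ^ 2 ≤ sobolevSq M f ^ l.card := by
  induction l using Multiset.induction_on with
  | empty => simp [diffMonomial]
  | cons a l ih =>
    obtain ⟨ha, hl⟩ := Multiset.forall_mem_cons.1 hl
    rw [diffMonomial_cons, Multiset.card_cons, pow_succ' (sobolevSq M f)]
    refine (mul_pow (iteratedDeriv a f x) (diffMonomial l f x) 2).trans_le ?_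
    exact mul_le_mul (sq_iteratedDeriv_le f ha x) (ih hl) (sq_nonneg _) (sobolevSq_nonneg f M)

theorem l2SqBound_diffMonomial_cons {a M N : ℕ} (ha : a ≤ N) {l : Multiset ℕ}
    (hl : ∀ i ∈ l, i + 1 ≤ M) :
    L2SqBound (diffMonomial (a ::ₘ l) f) (sobolevSq M f ^ l.card * sobolevSq N f) := by
  rw [diffMonomial_cons, mul_comm (derivOp a)]
  exact L2SqBound.bounded_mul (continuous_diffMonomial f l) (sq_diffMonomial_le f hl)
    ((l2SqBound_iteratedDeriv f a).mono (homSobolevSq_le_sobolevSq f ha))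

theorem l2SqBound_diffMonomial {d m : ℕ} (hm : 2 ≤ m) {l : Multiset ℕ} (hd : l.card = d + 1)
    (hw : l.sum ≤ m + 1) (hl : ∀ i ∈ l, i ≤ m) :
    L2SqBound (diffMonomial l f) (sobolevSq m f ^ (d + 1)) := by
  have bound (a : ℕ) (r : Multiset ℕ) (h : l = a ::ₘ r) (hr : ∀ i ∈ r, i + 1 ≤ m) :
      L2SqBound (diffMonomial l f) (sobolevSq m f ^ (d + 1)) := by
    have hcard : r.card = d := by rw [h, Multiset.card_cons] at hd; omega
    rw [pow_succ, ← hcard, h]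
    exact l2SqBound_diffMonomial_cons f (hl a (h ▸ Multiset.mem_cons_self a r)) hr
  by_cases hml : m ∈ l
  · obtain ⟨r, rfl⟩ := Multiset.exists_cons_of_mem hml
    rw [Multiset.sum_cons] at hw
    exact bound m r rfl fun i hi => by have := Multiset.le_sum_of_mem hi; omega
  · obtain ⟨a, ha⟩ := Multiset.card_pos_iff_exists_mem.1 (by omega : 0 < l.card)
    obtain ⟨r, rfl⟩ := Multiset.exists_cons_of_mem ha
    refine bound a r rfl fun i hi => (hl i (Multiset.mem_cons_of_mem hi)).lt_of_ne ?_
    rintro rfl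
    exact hml (Multiset.mem_cons_of_mem hi)

-- The top norm enters linearly, which makes the higher order energy estimates linear.
theorem l2SqBound_diffMonomial_linear {d m : ℕ} (hm : 2 ≤ m) {l : Multiset ℕ}
    (hd : l.card = d + 1) (hw : l.sum = m + 2) (hl : ∀ i ∈ l, i ≤ m + 1) :
    L2SqBound (diffMonomial l f) (sobolevSq m f ^ d * sobolevSq (m + 1) f) := by
  have bound (a : ℕ) (r : Multiset ℕ) (h : l = a ::ₘ r) (hr : ∀ i ∈ r, i + 1 ≤ m) :
      L2SqBound (diffMonomial l f) (sobolevSq m f ^ d * sobolevSq (m + 1) f) := by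
    have hcard : r.card = d := by rw [h, Multiset.card_cons] at hd; omega
    rw [← hcard, h]
    exact l2SqBound_diffMonomial_cons f (hl a (h ▸ Multiset.mem_cons_self a r)) hr
  by_cases hbig : ∃ a ∈ l, m ≤ a
  · obtain ⟨a, ha, hma⟩ := hbig
    obtain ⟨r, rfl⟩ := Multiset.exists_cons_of_mem ha
    rw [Multiset.sum_cons] at hw
    by_cases hr : ∀ i ∈ r, i + 1 ≤ m
    · exact bound a r rfl hr
    push Not at hr
    obtain ⟨b, hb, hmb⟩ := hr
    obtain ⟨r, rfl⟩ := Multiset.exists_cons_of_mem hb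
    rw [Multiset.sum_cons] at hw
    obtain ⟨n, rfl⟩ : ∃ n, d = n + 1 := ⟨d - 1, by simp at hd; omega⟩
    have hcard : r.card = n := by simpa using hd
    have hbr : L2SqBound (diffMonomial (b ::ₘ r) f) (sobolevSq m f ^ n * sobolevSq m f) :=
      hcard ▸ l2SqBound_diffMonomial_cons f (by omega) fun i hi => by
        have := Multiset.le_sum_of_mem hi
        omega
    rw [diffMonomial_cons, pow_succ, mul_comm _ (sobolevSq (m + 1) f)]
    exact L2SqBound.bounded_mul (continuous_iteratedDeriv f a)
      (sq_iteratedDeriv_le f (by omega : a + 1 ≤ m + 1)) hbr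
  · push Not at hbig
    obtain ⟨a, ha⟩ := Multiset.card_pos_iff_exists_mem.1 (by omega : 0 < l.card)
    obtain ⟨r, rfl⟩ := Multiset.exists_cons_of_mem ha
    exact bound a r rfl fun i hi => hbig i (Multiset.mem_cons_of_mem hi)

end DiffPoly

/-! ### The nonlinearity -/

/-- The `m`-th derivative of the nonlinearity `f ^ k * f'`. -/
noncomputable def nonlinearity (k m : ℕ) (f : SchwartzMap ℝ ℝ) : ℝ → ℝ :=
  iteratedDeriv m fun x => f x ^ k * deriv f x

/-- What remains of `∂^m (f ^ k * f')` after removing the top order term `f ^ k * ∂^(m+1) f`. -/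
noncomputable def nonlinearityRemainder (k m : ℕ) (f : SchwartzMap ℝ ℝ) (x : ℝ) : ℝ :=
  nonlinearity k m f x - f x ^ k * iteratedDeriv (m + 1) f x

theorem hasDerivAt_nonlinearity (k m : ℕ) (f : SchwartzMap ℝ ℝ) (x : ℝ) :
    HasDerivAt (nonlinearity k m f) (nonlinearity k (m + 1) f x) x := by
  refine hasDerivAt_iteratedDeriv_of_contDiff (((f.smooth ⊤).pow k).mul ?_) m x
  exact ((f.smooth ⊤).of_le le_rfl).deriv'

theorem nonlinearityRemainder_mem_diffPoly (k m : ℕ) :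
    nonlinearityRemainder k m ∈ diffPoly (k + 1) (m + 1) m := by
  induction m with
  | zero =>
    convert zero_mem (diffPoly (k + 1) 1 0) using 1
    ext f x
    simp [nonlinearityRemainder, nonlinearity, iteratedDeriv_one]
  | succ m ih =>
    obtain ⟨R, hR, hRd⟩ := exists_deriv_of_mem_diffPoly ih
    obtain ⟨P, hP, hPd⟩ := exists_deriv_diffMonomial (Multiset.replicate k 0) (m := m)
      (fun i hi => (Multiset.eq_of_mem_replicate hi).trans_le m.zero_le)
    have hpow (f : SchwartzMap ℝ ℝ) :
        diffMonomial (Multiset.replicate k 0) f = fun x => f x ^ k := by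
      ext x
      simp [diffMonomial, Pi.pow_apply]
    have hPR : derivOp (m + 1) * P ∈ diffPoly (k + 1) (m + 1 + 1) (m + 1) := by
      simpa using iteratedDeriv_mul_mem_diffPoly le_rfl hP
    convert add_mem hR hPR using 1
    ext f x
    have hprod := (hpow f ▸ hPd f x).mul (hasDerivAt_iteratedDeriv f (m + 1) x)
    have := ((hasDerivAt_nonlinearity k m f x).sub hprod).unique (hRd f x)
    simp only [nonlinearityRemainder, Pi.add_apply, Pi.mul_apply]
    linarith

/-! ### The equation and its energy estimates -/

section PowerBounds

variable {f : SchwartzMap ℝ ℝ} {ν X : ℝ} {M : ℕ}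

theorem hasDerivAt_apply_pow (f : SchwartzMap ℝ ℝ) (k : ℕ) (x : ℝ) :
    HasDerivAt (fun x => f x ^ k) (k * f x ^ (k - 1) * iteratedDeriv 1 f x) x := by
  have hpow := (hasDerivAt_iteratedDeriv f 0 x).pow k
  simp only [iteratedDeriv_zero, Nat.zero_add] at hpow
  exact hpow

theorem sq_apply_pow_le (hM : 1 ≤ M) (hX : sobolevSq M f ≤ X) (k : ℕ) (x : ℝ) :
    (f x ^ k) ^ 2 ≤ X ^ k := by
  have hsq : f x ^ 2 ≤ X := by
    simpa only [iteratedDeriv_zero] using (sq_iteratedDeriv_le f (m := 0) hM x).trans hX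
  rw [pow_right_comm]
  exact pow_le_pow_left₀ (sq_nonneg _) hsq k

theorem abs_deriv_apply_pow_le (hν : 0 < ν) (hf : sobolevSq 2 f ≤ ν ^ 2) (k : ℕ) (x : ℝ) :
    |k * f x ^ (k - 1) * iteratedDeriv 1 f x| ≤ (k + 1) * ν ^ k := by
  rcases k with _ | k
  · simp
  have hprod : |f x ^ k * iteratedDeriv 1 f x| ≤ ν ^ (k + 1) := by
    refine abs_le_of_sq_le_sq ?_ (by positivity)
    rw [mul_pow, pow_right_comm ν, pow_succ (ν ^ 2)]
    exact mul_le_mul (sq_apply_pow_le one_le_two hf k x)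
      ((sq_iteratedDeriv_le f le_rfl x).trans hf) (sq_nonneg _) (by positivity)
  rw [Nat.add_sub_cancel, mul_assoc, abs_mul, Nat.abs_cast]
  gcongr
  linarith

end PowerBounds

section DiffQuotNonlinearity

variable (f : SchwartzMap ℝ ℝ) (k m : ℕ)

theorem diffQuot_nonlinearity (h x : ℝ) :
    diffQuot h (nonlinearity k m f) x = f x ^ k * diffQuot h (iteratedDeriv (m + 1) f) x +
      diffQuot h (fun x => f x ^ k) x * iteratedDeriv (m + 1) f (x + h) +
      diffQuot h (nonlinearityRemainder k m f) x := by
  simp only [diffQuot, nonlinearityRemainder]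
  ring

/-- The source in the balance law for `(diffQuot h (∂^m U))²`, that is, the part of the nonlinear
contribution that is not an `x`-derivative. -/
noncomputable def diffQuotSource (h x : ℝ) : ℝ :=
  k * f x ^ (k - 1) * iteratedDeriv 1 f x * diffQuot h (iteratedDeriv m f) x *
      diffQuot h (iteratedDeriv m f) x +
    -2 * (diffQuot h (iteratedDeriv m f) x *
      (diffQuot h (fun x => f x ^ k) x * iteratedDeriv (m + 1) f (x + h))) +
    -2 * (diffQuot h (iteratedDeriv m f) x * diffQuot h (nonlinearityRemainder k m f) x)

variable {f k m} {h ν Y Z l : ℝ} {R' : ℝ → ℝ}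

theorem l2SqBound_diffQuot_iteratedDeriv (hh : h ≠ 0) (hY : homSobolevSq (m + 1) f ≤ Y) :
    L2SqBound (diffQuot h (iteratedDeriv m f)) Y :=
  ((l2SqBound_iteratedDeriv f (m + 1)).mono hY).diffQuot_of_hasDerivAt
    (hasDerivAt_iteratedDeriv f m) hh

theorem L2SqBound.diffQuot {g : ℝ → ℝ} (hg : L2SqBound g Y) (h : ℝ) :
    L2SqBound (diffQuot h g) (h⁻¹ ^ 2 * (2 * Y + 2 * Y)) := by
  convert ((hg.comp_add_right h).sub hg).const_mul h⁻¹ using 1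
  exact funext fun x => div_eq_inv_mul _ _

theorem continuous_uncurry_diffQuot {V : ℝ → ℝ → ℝ} (hV : Continuous (Function.uncurry V))
    (h : ℝ) : Continuous (Function.uncurry fun t => diffQuot h (V t)) := by
  have hshift : Continuous fun p : ℝ × ℝ => Function.uncurry V (p.1, p.2 + h) :=
    hV.comp (by fun_prop)
  exact (hshift.sub hV).div_const h

theorem l1Bound_diffQuotSource (hh : h ≠ 0) (hν : 0 < ν) (hf : sobolevSq 2 f ≤ ν ^ 2)
    (hY : homSobolevSq (m + 1) f ≤ Y)
    (hR : ∀ x, HasDerivAt (nonlinearityRemainder k m f) (R' x) x) (hR' : L2SqBound R' Z)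
    (hl : 0 < l) :
    L1Bound (diffQuotSource f k m h) ((3 * (k + 1) * ν ^ k + l) * Y + l⁻¹ * Z) := by
  set β : ℝ := (k + 1) * ν ^ k
  have hβ : 0 < β := by positivity
  have hz := l2SqBound_diffQuot_iteratedDeriv hh hY
  have hpow : Continuous fun x => k * f x ^ (k - 1) * iteratedDeriv 1 f x :=
    (continuous_const.mul (f.continuous.pow _)).mul (continuous_iteratedDeriv f 1)
  have hpow_le := abs_deriv_apply_pow_le hν hf k
  have transport := (L2SqBound.bounded_mul hpow
    (fun x => sq_le_sq' (abs_le.1 (hpow_le x)).1 (abs_le.1 (hpow_le x)).2) hz).mul hz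
    (inv_pos.2 hβ)
  have hdq_le := abs_diffQuot_le (hasDerivAt_apply_pow f k) hpow hpow_le hh
  have commutator := (hz.mul (L2SqBound.bounded_mul (continuous_diffQuot h (f.continuous.pow k))
    (fun x => sq_le_sq' (abs_le.1 (hdq_le x)).1 (abs_le.1 (hdq_le x)).2)
    (((l2SqBound_iteratedDeriv f (m + 1)).mono hY).comp_add_right h)) hβ).const_mul (-2)
  have remainder := (hz.mul (hR'.diffQuot_of_hasDerivAt hR hh) hl).const_mul (-2)
  refine ((transport.add commutator).add remainder).mono (le_of_eq ?_)
  rw [abs_neg, abs_two]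
  simp only [β]
  field_simp
  ring

end DiffQuotNonlinearity

namespace IsSchwartzSolution

variable {k : ℕ} {T : ℝ} {U : ℝ → SchwartzMap ℝ ℝ}
  (hU : IsSchwartzSolution (fun y => y ^ k) T U)
include hU

theorem timeDeriv_eq (m : ℕ) {t : ℝ} (ht : t ∈ Icc 0 T) (x : ℝ) :
    timeDeriv U m t x = -iteratedDeriv (m + 3) (U t) x - nonlinearity k m (U t) x := by
  induction m generalizing x with
  | zero =>
    have heq := hU.2 t ht x
    simp only [timeDeriv, nonlinearity, iteratedDeriv_zero, Nat.zero_add]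
    linarith
  | succ m ih =>
    have hrhs := (hasDerivAt_iteratedDeriv (U t) (m + 3) x).neg.sub
      (hasDerivAt_nonlinearity k m (U t) x)
    rw [(hasDerivAt_timeDeriv_right hU.1 m t x).unique
      (hrhs.congr_of_eventuallyEq (.of_forall ih)), Nat.add_right_comm]

variable {s : Set ℝ} {m : ℕ} {ν Y Z l h : ℝ} {R' : SchwartzMap ℝ ℝ → ℝ → ℝ}

/- Differencing before multiplying by `z = diffQuot h (∂^m U)` lets the weights of the estimate be
controlled by `‖∂^(m+1) U‖` alone; the fluxes, which are bounded only for fixed `h`, do not enter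
the conclusion. -/
theorem balanceLaw_diffQuot (hsT : s ⊆ Icc 0 T) (hh : h ≠ 0) (hν : 0 < ν)
    (hf : ∀ t ∈ s, sobolevSq 2 (U t) ≤ ν ^ 2) (hY : ∀ t ∈ s, homSobolevSq (m + 1) (U t) ≤ Y)
    (hR : ∀ f x, HasDerivAt (nonlinearityRemainder k m f) (R' f x) x)
    (hR' : ∀ t ∈ s, L2SqBound (R' (U t)) Z) (hl : 0 < l) :
    ∃ e' q₁ q₂ q₂', BalanceLaw s (fun t x => diffQuot h (iteratedDeriv m (U t)) x ^ 2) e'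
      (fun t => diffQuotSource (U t) k m h) q₁ q₂ q₂'
      ((3 * (k + 1) * ν ^ k + l) * Y + l⁻¹ * Z) := by
  set z : ℕ → ℝ → ℝ → ℝ := fun i t => diffQuot h (iteratedDeriv i (U t))
  have hz (i : ℕ) (t x : ℝ) : HasDerivAt (z i t) (z (i + 1) t x) x :=
    hasDerivAt_diffQuot h (hasDerivAt_iteratedDeriv (U t) i) x
  have hzc (i : ℕ) (t : ℝ) : Continuous (z i t) :=
    continuous_diffQuot h (continuous_iteratedDeriv (U t) i)
  have hz₀ (t : ℝ) (ht : t ∈ s) := l2SqBound_diffQuot_iteratedDeriv hh (hY t ht)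
  have hz₁ (t : ℝ) (ht : t ∈ s) :=
    ((l2SqBound_iteratedDeriv (U t) (m + 1)).mono (hY t ht)).diffQuot h
  refine ⟨fun t x => 2 * z m t x * diffQuot h (timeDeriv U m t) x,
    fun t x => 3 * (z (m + 1) t x * z (m + 1) t x) + -1 * (U t x ^ k * z m t x * z m t x),
    fun t x => -2 * (z m t x * z (m + 1) t x),
    fun t x => -2 * (z (m + 1) t x * z (m + 1) t x + z m t x * z (m + 2) t x),
    fun t => (l2SqBound_diffQuot_iteratedDeriv hh le_rfl).int, ?_, ?_, ?_,
    fun t _ x => ((hz m t x).mul (hz (m + 1) t x)).const_mul (-2),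
    fun t _ => continuous_const.mul (((hzc _ t).mul (hzc _ t)).add ((hzc _ t).mul (hzc _ t))),
    fun t ht => l1Bound_diffQuotSource hh hν (hf t ht) (hY t ht) (hR _) (hR' t ht) hl,
    ⟨_, fun t ht => (((hz₁ t ht).mul (hz₁ t ht) one_pos).const_mul 3).add
      (((L2SqBound.bounded_mul ((U t).continuous.pow k) (sq_apply_pow_le one_le_two (hf t ht) k)
        (hz₀ t ht)).mul (hz₀ t ht) one_pos).const_mul (-1))⟩,
    ⟨_, fun t ht => ((hz₀ t ht).mul (hz₁ t ht) one_pos).const_mul (-2)⟩⟩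
  · exact (continuous_const.mul (continuous_uncurry_diffQuot
      (contDiff_uncurry_iteratedDeriv hU.1 m).continuous h)).mul
      (continuous_uncurry_diffQuot (continuous_timeDeriv hU.1 m) h)
  · intro t x
    exact ((((hasDerivAt_timeDeriv hU.1 m t (x + h)).sub
      (hasDerivAt_timeDeriv hU.1 m t x)).div_const h).pow 2).congr_deriv (by simp [z, diffQuot])
  · intro t ht x
    refine (((((hz (m + 1) t x).mul (hz (m + 1) t x)).const_mul 3).add
      ((((hasDerivAt_apply_pow (U t) k x).mul (hz m t x)).mul (hz m t x)).const_mul (-1))).add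
      ((((hz (m + 1) t x).mul (hz (m + 1) t x)).add
        ((hz m t x).mul (hz (m + 2) t x))).const_mul (-2))).congr_deriv ?_
    have heq : diffQuot h (timeDeriv U m t) x = -z (m + 3) t x -
        diffQuot h (nonlinearity k m (U t)) x := by
      simp only [z, diffQuot, hU.timeDeriv_eq m (hsT ht)]
      ring
    rw [heq, diffQuot_nonlinearity]
    simp only [z, diffQuotSource, Pi.mul_apply]
    ring

theorem abs_homSobolevSq_succ_sub_le (hs : s.OrdConnected) (hsT : s ⊆ Icc 0 T) (hν : 0 < ν)
    (hf : ∀ t ∈ s, sobolevSq 2 (U t) ≤ ν ^ 2) (hY : ∀ t ∈ s, homSobolevSq (m + 1) (U t) ≤ Y)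
    (hR : ∀ f x, HasDerivAt (nonlinearityRemainder k m f) (R' f x) x)
    (hR' : ∀ t ∈ s, L2SqBound (R' (U t)) Z) (hl : 0 < l) {c d : ℝ} (hc : c ∈ s) (hd : d ∈ s) :
    |homSobolevSq (m + 1) (U d) - homSobolevSq (m + 1) (U c)| ≤
      ((3 * (k + 1) * ν ^ k + l) * Y + l⁻¹ * Z) * |d - c| := by
  have growth {a b : ℝ} (ha : a ∈ s) (hb : b ∈ s) : homSobolevSq (m + 1) (U b) ≤
      homSobolevSq (m + 1) (U a) + ((3 * (k + 1) * ν ^ k + l) * Y + l⁻¹ * Z) * |b - a| := by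
    refine (L2SqBound.of_diffQuot (hasDerivAt_iteratedDeriv (U b) m)
      (continuous_iteratedDeriv (U b) (m + 1)) fun h hh => ?_).le
    obtain ⟨e', q₁, q₂, q₂', law⟩ :=
      hU.balanceLaw_diffQuot hsT hh.ne' hν hf hY hR hR' hl
    have hza := l2SqBound_diffQuot_iteratedDeriv hh.ne' (le_refl (homSobolevSq (m + 1) (U a)))
    have hzb := l2SqBound_diffQuot_iteratedDeriv hh.ne' (le_refl (homSobolevSq (m + 1) (U b)))
    refine ⟨hzb.cont, hzb.int, ?_⟩
    linarith [hza.le, (abs_le.1 (law.abs_integral_sub_le hs ha hb)).2]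
  rw [abs_sub_le_iff]
  constructor
  · linarith [growth hc hd]
  · rw [abs_sub_comm]
    linarith [growth hd hc]

end IsSchwartzSolution

/-! ### Mass, energy, and the modified second-order energy -/

section Nonlinearity

variable (k : ℕ) (f : SchwartzMap ℝ ℝ) (x : ℝ)

theorem nonlinearity_zero : nonlinearity k 0 f x = f x ^ k * iteratedDeriv 1 f x := by
  rw [nonlinearity, iteratedDeriv_zero, iteratedDeriv_one]

theorem nonlinearity_one : nonlinearity k 1 f x =
    f x ^ k * iteratedDeriv 2 f x + k * f x ^ (k - 1) * iteratedDeriv 1 f x ^ 2 := by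
  have hderiv := ((hasDerivAt_apply_pow f k x).mul
    (hasDerivAt_iteratedDeriv f 1 x)).congr_of_eventuallyEq
    (.of_forall fun y => nonlinearity_zero k f y)
  rw [(hasDerivAt_nonlinearity k 0 f x).unique hderiv]
  ring

theorem nonlinearity_two : nonlinearity k 2 f x = f x ^ k * iteratedDeriv 3 f x +
    3 * k * f x ^ (k - 1) * iteratedDeriv 1 f x * iteratedDeriv 2 f x +
    k * ((k - 1 : ℕ) * f x ^ (k - 1 - 1)) * iteratedDeriv 1 f x ^ 3 := by
  have hderiv := (((hasDerivAt_apply_pow f k x).mul (hasDerivAt_iteratedDeriv f 2 x)).add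
    (((hasDerivAt_apply_pow f (k - 1) x).const_mul (k : ℝ)).mul
      ((hasDerivAt_iteratedDeriv f 1 x).pow 2))).congr_of_eventuallyEq
    (.of_forall fun y => nonlinearity_one k f y)
  rw [(hasDerivAt_nonlinearity k 1 f x).unique hderiv]
  simp only [Pi.pow_apply]
  push_cast
  ring

end Nonlinearity

section WeightedProducts

variable {f : SchwartzMap ℝ ℝ} {X Y Z : ℝ} {M : ℕ}

theorem l1Bound_zero : L1Bound 0 0 :=
  ⟨continuous_const, integrable_zero _ _ _, by simp⟩

theorem l2SqBound_iteratedDeriv_of_le {i : ℕ} (hi : i ≤ M) (hX : sobolevSq M f ≤ X) :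
    L2SqBound (iteratedDeriv i f) X :=
  (l2SqBound_iteratedDeriv f i).mono ((homSobolevSq_le_sobolevSq f hi).trans hX)

theorem L2SqBound.pow_mul {g : ℝ → ℝ} (hg : L2SqBound g Y) (hM : 1 ≤ M) (hX : sobolevSq M f ≤ X)
    (n : ℕ) : L2SqBound (fun x => f x ^ n * g x) (X ^ n * Y) :=
  L2SqBound.bounded_mul (f.continuous.pow n) (sq_apply_pow_le hM hX n) hg

theorem l2SqBound_pow_succ (hM : 1 ≤ M) (hX : sobolevSq M f ≤ X) (n : ℕ) :
    L2SqBound (fun x => f x ^ (n + 1)) (X ^ n * X) := by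
  simp only [pow_succ _ n]
  exact (l2SqBound_iteratedDeriv_of_le (Nat.zero_le M) hX).pow_mul hM hX n

theorem l1Bound_pow_add_two (hM : 1 ≤ M) (hX : sobolevSq M f ≤ X) (n : ℕ) :
    L1Bound (fun x => f x ^ (n + 2)) ((X ^ n * X + X) / 2) := by
  simpa only [pow_succ _ (n + 1), one_mul, inv_one, iteratedDeriv_zero] using
    (l2SqBound_pow_succ hM hX n).mul (l2SqBound_iteratedDeriv_of_le (Nat.zero_le M) hX) one_pos

end WeightedProducts

/-- The conserved energy `∫ (∂ₓf)² - 2 / ((k + 1) (k + 2)) f ^ (k + 2)` of the equation with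
power `k`. -/
noncomputable def gkdvEnergy (k : ℕ) (f : SchwartzMap ℝ ℝ) : ℝ :=
  homSobolevSq 1 f + ∫ x, -(2 / ((k + 1) * (k + 2))) * f x ^ (k + 2)

/-- The second-order energy `∫ (∂ₓ²f)² - (5/3) f ^ k (∂ₓf)²`, whose correction removes from the
evolution of `∫ (∂ₓ²U)²` the terms quadratic in `∂ₓ²U`. -/
noncomputable def modifiedEnergy (k : ℕ) (f : SchwartzMap ℝ ℝ) : ℝ :=
  homSobolevSq 2 f + ∫ x, -(5 / 3) * (f x ^ k * iteratedDeriv 1 f x * iteratedDeriv 1 f x)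

/-- The source in the balance law for the density of `modifiedEnergy`. -/
noncomputable def modifiedEnergySource (k : ℕ) (f : SchwartzMap ℝ ℝ) (x : ℝ) : ℝ :=
  -(1 / 3) * (k * (k - 1 : ℕ)) * (f x ^ (k - 1 - 1) * (iteratedDeriv 1 f x *
      (iteratedDeriv 1 f x * iteratedDeriv 1 f x)) * iteratedDeriv 2 f x) +
    5 * k * (f x ^ (k - 1 + k) * (iteratedDeriv 1 f x * iteratedDeriv 1 f x) *
      iteratedDeriv 1 f x) +
    10 / 3 * (f x ^ (k + k) * iteratedDeriv 1 f x * iteratedDeriv 2 f x)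

theorem abs_homSobolevSq_two_sub_modifiedEnergy_le (k : ℕ) {f : SchwartzMap ℝ ℝ} {a : ℝ}
    (ha : sobolevSq 1 f ≤ a) :
    |homSobolevSq 2 f - modifiedEnergy k f| ≤ 5 / 3 * ((a ^ k * a + a) / 2) := by
  have hf' := l2SqBound_iteratedDeriv_of_le le_rfl ha
  have hcorr := (((hf'.pow_mul le_rfl ha k).mul hf' one_pos).const_mul (-(5 / 3))).abs_integral_le
  rw [modifiedEnergy, sub_add_cancel_left, abs_neg]
  refine hcorr.trans_eq ?_
  rw [abs_neg, abs_of_pos (by norm_num), one_mul, inv_one, one_mul]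

theorem exists_l1Bound_modifiedEnergySource (k : ℕ) {a : ℝ} (ha₀ : 0 ≤ a) :
    ∃ A, 0 ≤ A ∧ ∀ (f : SchwartzMap ℝ ℝ) (Y : ℝ), sobolevSq 1 f ≤ a → homSobolevSq 2 f ≤ Y →
      L1Bound (modifiedEnergySource k f) (A * (1 + Y)) := by
  refine ⟨|-(1 / 3) * (k * (k - 1 : ℕ) : ℝ)| * ((a ^ (k - 1 - 1) * ((a + 1) ^ 2 * a) + 1) / 2) +
    |5 * (k : ℝ)| * ((a ^ (k - 1 + k) * ((a + 1) * a) + a) / 2) +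
    |(10 / 3 : ℝ)| * ((a ^ (k + k) * a + 1) / 2), by positivity, fun f Y ha hY => ?_⟩
  set r : ℝ := √(1 + Y)
  have hY₀ : 0 ≤ Y := (homSobolevSq_nonneg f 2).trans hY
  have hr : 0 < r := Real.sqrt_pos.2 (by linarith)
  have hrr : r * r = 1 + Y := Real.mul_self_sqrt (by linarith)
  have hr₁ : 1 ≤ r := Real.one_le_sqrt.2 (by linarith)
  have hf₁ := l2SqBound_iteratedDeriv_of_le le_rfl ha
  have hf₂ := (l2SqBound_iteratedDeriv f 2).mono (hY.trans (le_add_of_nonneg_left zero_le_one))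
  have sup_le (x : ℝ) : iteratedDeriv 1 f x ^ 2 ≤ r * (a + 1) := by
    have hsup := L2SqBound.sq_apply_le (hasDerivAt_iteratedDeriv f 1) hf₁ hf₂ hr x
    rwa [← hrr, inv_mul_cancel_left₀ hr.ne', ← mul_add_one] at hsup
  have mul_deriv {g : ℝ → ℝ} {X : ℝ} (hg : L2SqBound g X) :
      L2SqBound (fun x => iteratedDeriv 1 f x * g x) (r * (a + 1) * X) :=
    L2SqBound.bounded_mul (continuous_iteratedDeriv f 1) sup_le hg
  have quartic := (((mul_deriv (mul_deriv hf₁)).pow_mul le_rfl ha (k - 1 - 1)).mul hf₂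
    one_pos).const_mul (-(1 / 3) * (k * (k - 1 : ℕ)))
  have cubic := (((mul_deriv hf₁).pow_mul le_rfl ha (k - 1 + k)).mul hf₁ one_pos).const_mul (5 * k)
  have quadratic := ((hf₁.pow_mul le_rfl ha (k + k)).mul hf₂ one_pos).const_mul (10 / 3)
  refine ((quartic.add cubic).add quadratic).mono ?_
  simp only [one_mul, inv_one]
  rw [← hrr, add_mul, add_mul, mul_assoc |_| _ (r * r), mul_assoc |_| _ (r * r),
    mul_assoc |_| _ (r * r)]
  have hrr₁ : r ≤ r * r := le_mul_of_one_le_left hr.le hr₁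
  gcongr |_| * ?_ + |_| * ?_ + |_| * ?_
  · linarith
  · nlinarith [show 0 ≤ a ^ (k - 1 + k) * ((a + 1) * a) by positivity]
  · nlinarith [show 0 ≤ a ^ (k + k) * a by positivity]

/- The dispersive term contributes `-2 ∂^i U ∂^(i+3) U = ∂ₓ(3 (∂^(i+1) U)² - ∂ₓ²(∂^i U)²)`. -/
theorem abs_homSobolevSq_add_integral_sub_le {U : ℝ → SchwartzMap ℝ ℝ}
    (hU : ContDiff ℝ ∞ (fun p : ℝ × ℝ => U p.1 p.2)) {s : Set ℝ} (hs : s.OrdConnected) {i : ℕ}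
    {F : ℝ → ℝ → ℝ} (hF : ∀ t ∈ s, ∀ x,
      timeDeriv U i t x = -iteratedDeriv (i + 3) (U t) x - F t x)
    {X : ℝ} (hX : ∀ t ∈ s, sobolevSq (i + 1) (U t) ≤ X)
    {p p' g q q' : ℝ → ℝ → ℝ} {B c d : ℝ}
    (hp : ∀ t, Integrable (p t)) (hp'_cont : Continuous (Function.uncurry p'))
    (hp' : ∀ t x, HasDerivAt (fun τ => p τ x) (p' t x) t)
    (hq' : ∀ t ∈ s, ∀ x, HasDerivAt (q t) (q' t x) x)
    (balance : ∀ t ∈ s, ∀ x,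
      q' t x + g t x = p' t x - 2 * iteratedDeriv i (U t) x * F t x)
    (hg : ∀ t ∈ s, L1Bound (g t) B) (hq : ∃ K, ∀ t ∈ s, L1Bound (q t) K)
    (hc : c ∈ s) (hd : d ∈ s) :
    |(homSobolevSq i (U d) + ∫ x, p d x) - (homSobolevSq i (U c) + ∫ x, p c x)| ≤
      B * |d - c| := by
  set V : ℕ → ℝ → ℝ → ℝ := fun j t => iteratedDeriv j (U t)
  have hV (j : ℕ) (t x : ℝ) : HasDerivAt (V j t) (V (j + 1) t x) x :=
    hasDerivAt_iteratedDeriv (U t) j x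
  have hVc (j : ℕ) (t : ℝ) : Continuous (V j t) := continuous_iteratedDeriv (U t) j
  have hV₀ (t : ℝ) (ht : t ∈ s) := l2SqBound_iteratedDeriv_of_le i.le_succ (hX t ht)
  have hV₁ (t : ℝ) (ht : t ∈ s) := l2SqBound_iteratedDeriv_of_le le_rfl (hX t ht)
  obtain ⟨K, hK⟩ := hq
  have law : BalanceLaw s (fun t x => V i t x ^ 2 + p t x)
      (fun t x => 2 * V i t x * timeDeriv U i t x + p' t x) g
      (fun t x => 3 * (V (i + 1) t x * V (i + 1) t x) + q t x)
      (fun t x => -2 * (V i t x * V (i + 1) t x))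
      (fun t x => -2 * (V (i + 1) t x * V (i + 1) t x + V i t x * V (i + 2) t x)) B := by
    refine ⟨fun t => (l2SqBound_iteratedDeriv (U t) i).int.add (hp t),
      ((continuous_const.mul (contDiff_uncurry_iteratedDeriv hU i).continuous).mul
        (continuous_timeDeriv hU i)).add hp'_cont,
      fun t x => (((hasDerivAt_timeDeriv hU i t x).pow 2).add (hp' t x)).congr_deriv
        (by simp [V]), ?_,
      fun t _ x => ((hV i t x).mul (hV (i + 1) t x)).const_mul (-2),
      fun t _ => continuous_const.mul (((hVc _ t).mul (hVc _ t)).add ((hVc _ t).mul (hVc _ t))),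
      hg, ⟨_, fun t ht => (((hV₁ t ht).mul (hV₁ t ht) one_pos).const_mul 3).add (hK t ht)⟩,
      ⟨_, fun t ht => ((hV₀ t ht).mul (hV₁ t ht) one_pos).const_mul (-2)⟩⟩
    intro t ht x
    refine (((((hV (i + 1) t x).mul (hV (i + 1) t x)).const_mul 3).add (hq' t ht x)).add
      ((((hV (i + 1) t x).mul (hV (i + 1) t x)).add
        ((hV i t x).mul (hV (i + 2) t x))).const_mul (-2))).congr_deriv ?_
    rw [hF t ht, eq_sub_iff_add_eq.2 (balance t ht x)]
    ring
  have h_int (t : ℝ) : ∫ x, (V i t x ^ 2 + p t x) = homSobolevSq i (U t) + ∫ x, p t x :=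
    integral_add (l2SqBound_iteratedDeriv (U t) i).int (hp t)
  simpa only [h_int] using law.abs_integral_sub_le hs hc hd

namespace IsSchwartzSolution

variable {k : ℕ} {T : ℝ} {U : ℝ → SchwartzMap ℝ ℝ}
  (hU : IsSchwartzSolution (fun y => y ^ k) T U)
include hU

variable {s : Set ℝ} {X : ℝ} {c d : ℝ}

theorem homSobolevSq_zero_eq (hs : s.OrdConnected) (hsT : s ⊆ Icc 0 T)
    (hX : ∀ t ∈ s, sobolevSq 1 (U t) ≤ X) (hc : c ∈ s) (hd : d ∈ s) :
    homSobolevSq 0 (U d) = homSobolevSq 0 (U c) := by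
  have drift := abs_homSobolevSq_add_integral_sub_le hU.1 hs
    (fun t ht => hU.timeDeriv_eq 0 (hsT ht)) hX (p := 0) (p' := 0) (g := 0)
    (B := 0) (fun _ => integrable_zero _ _ _) continuous_const (fun _ _ => hasDerivAt_const _ _)
    (fun t _ x => (hasDerivAt_apply_pow (U t) (k + 2) x).const_mul (-(2 / ((k : ℝ) + 2))))
    (fun t _ x => ?_) (fun _ _ => l1Bound_zero)
    ⟨_, fun t ht => (l1Bound_pow_add_two le_rfl (hX t ht) k).const_mul _⟩ hc hd
  · simpa [sub_eq_zero] using drift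
  · rw [nonlinearity_zero, iteratedDeriv_zero, show k + 2 - 1 = k + 1 from rfl]
    simp only [Pi.zero_apply]
    push_cast
    field_simp
    ring

theorem gkdvEnergy_eq (hs : s.OrdConnected) (hsT : s ⊆ Icc 0 T)
    (hX : ∀ t ∈ s, sobolevSq 2 (U t) ≤ X) (hc : c ∈ s) (hd : d ∈ s) :
    gkdvEnergy k (U d) = gkdvEnergy k (U c) := by
  set V : ℕ → ℝ → ℝ → ℝ := fun j t => iteratedDeriv j (U t)
  have hV (j : ℕ) (t x : ℝ) : HasDerivAt (V j t) (V (j + 1) t x) x :=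
    hasDerivAt_iteratedDeriv (U t) j x
  have hpow (n : ℕ) (t x : ℝ) := hasDerivAt_apply_pow (U t) n x
  have hV₁ (t : ℝ) (ht : t ∈ s) := l2SqBound_iteratedDeriv_of_le one_le_two (hX t ht)
  have hV₂ (t : ℝ) (ht : t ∈ s) := l2SqBound_iteratedDeriv_of_le le_rfl (hX t ht)
  have drift := abs_homSobolevSq_add_integral_sub_le hU.1 hs
    (fun t ht => hU.timeDeriv_eq 1 (hsT ht)) hX (B := 0) (g := 0)
    (p := fun t x => -(2 / ((k + 1) * (k + 2))) * U t x ^ (k + 2))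
    (p' := fun t x => -(2 / (k + 1)) * (U t x ^ (k + 1) * timeDeriv U 0 t x))
    (fun t => ((l1Bound_pow_add_two le_rfl le_rfl k).const_mul _).int)
    (continuous_const.mul (((contDiff_uncurry_iteratedDeriv hU.1 0).continuous.pow (k + 1)).mul
      (continuous_timeDeriv hU.1 0)))
    (fun t x => ?_)
    (fun t _ x => (((((hpow k t x).mul (hV 1 t x)).mul (hV 1 t x)).const_mul (-2)).add
      (((hpow (k + 1) t x).mul (hV 2 t x)).const_mul (2 / ((k : ℝ) + 1)))).add
      ((hpow (k + k + 2) t x).const_mul (1 / ((k : ℝ) + 1) ^ 2)))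
    (fun t ht x => ?_) (fun _ _ => l1Bound_zero)
    ⟨_, fun t ht => (((((hV₁ t ht).pow_mul one_le_two (hX t ht) k).mul
        (hV₁ t ht) one_pos).const_mul _).add
      (((l2SqBound_pow_succ one_le_two (hX t ht) k).mul (hV₂ t ht) one_pos).const_mul _)).add
      ((l1Bound_pow_add_two one_le_two (hX t ht) (k + k)).const_mul _)⟩ hc hd
  · rw [zero_mul, abs_nonpos_iff, sub_eq_zero] at drift
    exact drift
  · refine (((hasDerivAt_timeDeriv hU.1 0 t x).pow (k + 2)).const_mul
      (-(2 / (((k : ℝ) + 1) * (k + 2))))).congr_deriv ?_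
    rw [iteratedDeriv_zero, show k + 2 - 1 = k + 1 from rfl]
    push_cast
    field_simp
  · rw [hU.timeDeriv_eq 0 (hsT ht), nonlinearity_zero, nonlinearity_one,
      show k + 1 - 1 = k from rfl, show k + k + 2 - 1 = k + k + 1 from rfl]
    simp only [Pi.mul_apply, V, Pi.zero_apply]
    push_cast
    field_simp
    ring

theorem abs_modifiedEnergy_sub_le (hs : s.OrdConnected) (hsT : s ⊆ Icc 0 T)
    (hX : ∀ t ∈ s, sobolevSq 3 (U t) ≤ X) {B : ℝ}
    (hB : ∀ t ∈ s, L1Bound (modifiedEnergySource k (U t)) B) (hc : c ∈ s) (hd : d ∈ s) :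
    |modifiedEnergy k (U d) - modifiedEnergy k (U c)| ≤ B * |d - c| := by
  set V : ℕ → ℝ → ℝ → ℝ := fun j t => iteratedDeriv j (U t)
  have hV (j : ℕ) (t x : ℝ) : HasDerivAt (V j t) (V (j + 1) t x) x :=
    hasDerivAt_iteratedDeriv (U t) j x
  have hpow (n : ℕ) (t x : ℝ) := hasDerivAt_apply_pow (U t) n x
  have hW (j : ℕ) (t x : ℝ) := hasDerivAt_timeDeriv hU.1 j t x
  have hVc (j : ℕ) := (contDiff_uncurry_iteratedDeriv hU.1 j).continuous
  have hWc (j : ℕ) := continuous_timeDeriv hU.1 j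
  have hV₁ (t : ℝ) := l2SqBound_iteratedDeriv_of_le le_rfl (le_refl (sobolevSq 1 (U t)))
  have hVX (t : ℝ) (ht : t ∈ s) {j : ℕ} (hj : j ≤ 3) : L2SqBound (V j t) X :=
    l2SqBound_iteratedDeriv_of_le hj (hX t ht)
  have h13 : (1 : ℕ) ≤ 3 := by norm_num
  have h23 : (2 : ℕ) ≤ 3 := by norm_num
  refine abs_homSobolevSq_add_integral_sub_le hU.1 hs
    (fun t ht => hU.timeDeriv_eq 2 (hsT ht)) hX
    (p' := fun t x => -(5 / 3) * (k * U t x ^ (k - 1) * timeDeriv U 0 t x * V 1 t x ^ 2 +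
      2 * U t x ^ k * V 1 t x * timeDeriv U 1 t x))
    (fun t => ((((hV₁ t).pow_mul le_rfl le_rfl k).mul (hV₁ t) one_pos).const_mul _).int)
    (continuous_const.mul (((((continuous_const.mul ((hVc 0).pow _)).mul (hWc 0)).mul
      ((hVc 1).pow 2))).add (((continuous_const.mul ((hVc 0).pow _)).mul (hVc 1)).mul (hWc 1))))
    (fun t x => ?_)
    (fun t _ x => (((((hpow k t x).mul (hV 2 t x)).mul (hV 2 t x)).const_mul (-(8 / 3))).add
      ((((hpow k t x).mul (hV 1 t x)).mul (hV 3 t x)).const_mul (10 / 3))).add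
      ((((hpow (k - 1) t x).mul ((hV 1 t x).mul (hV 1 t x))).mul (hV 2 t x)).const_mul
        (-(5 / 3) * (k : ℝ))))
    (fun t ht x => ?_) hB
    ⟨_, fun t ht => (((((hVX t ht h23).pow_mul h13 (hX t ht) k).mul
        (hVX t ht h23) one_pos).const_mul _).add
      ((((hVX t ht h13).pow_mul h13 (hX t ht) k).mul (hVX t ht le_rfl) one_pos).const_mul _)).add
      ((((L2SqBound.bounded_mul (continuous_iteratedDeriv (U t) 1)
        (fun x => (sq_iteratedDeriv_le (U t) h23 x).trans (hX t ht))
        (hVX t ht h13)).pow_mul h13 (hX t ht) (k - 1)).mul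
        (hVX t ht h23) one_pos).const_mul _)⟩ hc hd
  · refine (((((hW 0 t x).pow k).mul (hW 1 t x)).mul (hW 1 t x)).const_mul
      (-(5 / 3))).congr_deriv ?_
    simp only [Pi.mul_apply, Pi.pow_apply, iteratedDeriv_zero, V]
    ring
  · rw [hU.timeDeriv_eq 0 (hsT ht), hU.timeDeriv_eq 1 (hsT ht), nonlinearity_zero,
      nonlinearity_one, nonlinearity_two, modifiedEnergySource]
    simp only [Pi.mul_apply, V]
    ring

end IsSchwartzSolution

/-! ### Persistence of Sobolev regularity -/

theorem exists_deriv_nonlinearityRemainder (k m : ℕ) :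
    ∃ R' ∈ diffPoly (k + 1) (m + 2) (m + 1),
      ∀ f x, HasDerivAt (nonlinearityRemainder k m f) (R' f x) x :=
  exists_deriv_of_mem_diffPoly (nonlinearityRemainder_mem_diffPoly k m)

theorem exists_abs_homSobolevSq_sub_le (k : ℕ) {m N : ℕ} (hN : 2 ≤ N) (hm : m ≤ N) :
    ∃ D > 0, ∀ {T : ℝ} {U : ℝ → SchwartzMap ℝ ℝ} {s : Set ℝ} {ν : ℝ},
      IsSchwartzSolution (fun y => y ^ k) T U → s.OrdConnected → s ⊆ Icc 0 T → 0 < ν →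
      (∀ t ∈ s, sobolevSq N (U t) ≤ ν ^ 2) → ∀ c ∈ s, ∀ d ∈ s,
      |homSobolevSq m (U d) - homSobolevSq m (U c)| ≤ D * ν ^ (k + 2) * |d - c| := by
  rcases m with _ | m
  · refine ⟨1, one_pos, fun {_ U _ _} hU hs hsT hν hf c hc d hd => ?_⟩
    rw [hU.homSobolevSq_zero_eq hs hsT
      (fun t ht => (sobolevSq_mono (U t) (by omega)).trans (hf t ht)) hc hd, sub_self, abs_zero]
    positivity
  obtain ⟨R', hR', hR⟩ := exists_deriv_nonlinearityRemainder k m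
  obtain ⟨C, hC, bound⟩ := exists_l2SqBound_of_mem_diffPoly
    (fun l hd hw hl f => l2SqBound_diffMonomial f hN hd (by omega) fun i hi =>
      (hl i hi).trans hm) hR'
  refine ⟨3 * (k + 1) + 1 + C, by positivity, fun {T U s ν} hU hs hsT hν hf c hc d hd => ?_⟩
  refine (hU.abs_homSobolevSq_succ_sub_le hs hsT hν
    (fun t ht => (sobolevSq_mono (U t) hN).trans (hf t ht))
    (fun t ht => (homSobolevSq_le_sobolevSq (U t) hm).trans (hf t ht)) hR
    (fun t ht => (bound (U t)).mono (mul_le_mul_of_nonneg_left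
      (pow_le_pow_left₀ (sobolevSq_nonneg _ _) (hf t ht) _) hC))
    (pow_pos hν k) hc hd).trans_eq ?_
  field_simp
  ring

theorem exists_abs_sobolevSq_sub_le (k : ℕ) {N : ℕ} (hN : 2 ≤ N) :
    ∃ D > 0, ∀ {T : ℝ} {U : ℝ → SchwartzMap ℝ ℝ} {s : Set ℝ} {ν : ℝ},
      IsSchwartzSolution (fun y => y ^ k) T U → s.OrdConnected → s ⊆ Icc 0 T → 0 < ν →
      (∀ t ∈ s, sobolevSq N (U t) ≤ ν ^ 2) → ∀ c ∈ s, ∀ d ∈ s,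
      |sobolevSq N (U d) - sobolevSq N (U c)| ≤ D * ν ^ (k + 2) * |d - c| := by
  choose! D hD bound using fun m (hm : m ≤ N) => exists_abs_homSobolevSq_sub_le k hN hm
  have hlt {m : ℕ} (hm : m ∈ Finset.range (N + 1)) : m ≤ N :=
    Nat.lt_succ_iff.1 (Finset.mem_range.1 hm)
  refine ⟨∑ m ∈ Finset.range (N + 1), D m, Finset.sum_pos (fun m hm => hD m (hlt hm)) (by simp),
    fun hU hs hsT hν hf c hc d hd => ?_⟩
  rw [sobolevSq, sobolevSq, ← Finset.sum_sub_distrib, Finset.sum_mul, Finset.sum_mul]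
  exact (Finset.abs_sum_le_sum_abs _ _).trans (Finset.sum_le_sum fun m hm =>
    bound m (hlt hm) hU hs hsT hν hf c hc d hd)

theorem exists_sobolevSq_le_four_mul (k : ℕ) {N : ℕ} (hN : 2 ≤ N) :
    ∃ D > 0, ∀ {T : ℝ} {U : ℝ → SchwartzMap ℝ ℝ} {a t n : ℝ},
      IsSchwartzSolution (fun y => y ^ k) T U → a ∈ Icc 0 T → t ∈ Icc 0 T → 0 < n →
      BddAbove ((fun r => sobolevSq N (U r)) '' uIcc a t) → sobolevSq N (U a) ≤ n ^ 2 →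
      D * n ^ k * |t - a| ≤ 1 → ∀ r ∈ uIcc a t, sobolevSq N (U r) ≤ 4 * n ^ 2 := by
  obtain ⟨D, hD, lip⟩ := exists_abs_sobolevSq_sub_le k hN
  refine ⟨D * 2 ^ (k + 2), by positivity, fun {T U a t n} hU ha ht hn hb hUa hsmall r hr => ?_⟩
  have hsub : uIcc a t ⊆ Icc 0 T := ordConnected_Icc.uIcc_subset ha ht
  refine (lt_of_forall_abs_sub_le (G := fun Y => D * (max √Y n) ^ (k + 2))
    (fun Y => by positivity) hb (fun Y c hc d hd hY => ?_) ?_ r hr).le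
  · refine lip hU ordConnected_uIcc ((uIcc_subset_uIcc hc hd).trans hsub) (lt_max_of_lt_right hn)
      (fun t ht => (hY t ht).trans ?_) c left_mem_uIcc d right_mem_uIcc
    have hY₀ : 0 ≤ Y := (sobolevSq_nonneg _ _).trans (hY c left_mem_uIcc)
    calc Y = √Y ^ 2 := (sq_sqrt hY₀).symm
      _ ≤ max √Y n ^ 2 := pow_le_pow_left₀ (sqrt_nonneg Y) (le_max_left _ _) 2
  · have hsqrt : √(4 * n ^ 2) = 2 * n := by
      rw [show 4 * n ^ 2 = (2 * n) ^ 2 by ring, sqrt_sq (by positivity)]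
    calc sobolevSq N (U a) + D * max √(4 * n ^ 2) n ^ (k + 2) * |t - a|
        = sobolevSq N (U a) + D * 2 ^ (k + 2) * n ^ k * |t - a| * n ^ 2 := by
          rw [hsqrt, max_eq_left (by linarith)]
          ring
      _ ≤ n ^ 2 + 1 * n ^ 2 := by gcongr
      _ < 4 * n ^ 2 := by linarith [pow_pos hn 2]

/-! ### Coercivity of the energy -/

/-- On `S`, fixing the mass and the energy of `f` bounds the `L²` norm of `f'`. -/
def EnergyCoerciveOn (k : ℕ) (S : Set (SchwartzMap ℝ ℝ)) : Prop :=
  ∀ m E : ℝ, ∃ b, ∀ f ∈ S, homSobolevSq 0 f = m → gkdvEnergy k f = E → homSobolevSq 1 f ≤ b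

theorem homSobolevSq_one_le {k : ℕ} {f : SchwartzMap ℝ ℝ} {β : ℝ} (hβ : ∀ x, (f x ^ k) ^ 2 ≤ β) :
    homSobolevSq 1 f ≤ |gkdvEnergy k f| + (β * homSobolevSq 0 f + homSobolevSq 0 f) / 2 := by
  have hf : L2SqBound f (homSobolevSq 0 f) := l2SqBound_iteratedDeriv f 0
  have hpow := ((L2SqBound.bounded_mul (f.continuous.pow k) hβ hf).mul hf one_pos).abs_integral_le
  have hcoeff : |-(2 / (((k : ℝ) + 1) * (k + 2)))| ≤ 1 := by
    rw [abs_neg, abs_of_pos (by positivity), div_le_one (by positivity)]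
    nlinarith [Nat.cast_nonneg (α := ℝ) k]
  have hpotential : |∫ x, -(2 / (((k : ℝ) + 1) * (k + 2))) * f x ^ (k + 2)| ≤
      (β * homSobolevSq 0 f + homSobolevSq 0 f) / 2 := by
    rw [integral_const_mul, abs_mul]
    refine (mul_le_of_le_one_left (abs_nonneg _) hcoeff).trans ?_
    simpa only [Pi.pow_apply, ← pow_succ, one_mul, inv_one] using hpow
  have henergy : homSobolevSq 1 f = gkdvEnergy k f -
      ∫ x, -(2 / (((k : ℝ) + 1) * (k + 2))) * f x ^ (k + 2) := (add_sub_cancel_right _ _).symm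
  linarith [le_abs_self (gkdvEnergy k f), neg_le_of_abs_le hpotential]

theorem energyCoerciveOn_of_abs_le (k : ℕ) (K : ℝ) :
    EnergyCoerciveOn k {f | ∀ x, |f x| ≤ K} := by
  refine fun m E => ⟨_, fun f hf hm hE => hE ▸ hm ▸ homSobolevSq_one_le (β := (K ^ k) ^ 2)
    fun x => ?_⟩
  rw [← sq_abs, abs_pow]
  have := hf x
  gcongr

theorem energyCoerciveOn_univ : EnergyCoerciveOn 1 univ := by
  refine fun m E => ⟨2 * |E| + (m + 1) * m * m + m, fun f _ hm hE => ?_⟩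
  subst hm hE
  have hm₀ : 0 ≤ homSobolevSq 0 f := homSobolevSq_nonneg f 0
  have hy₀ : 0 ≤ homSobolevSq 1 f := homSobolevSq_nonneg f 1
  have hy := homSobolevSq_one_le (k := 1) (f := f) fun x => by
    simpa using sq_iteratedDeriv_le_mul_add f (by linarith : 0 < homSobolevSq 0 f + 1) 0 x
  have habsorb : (homSobolevSq 0 f + 1)⁻¹ * homSobolevSq 1 f * homSobolevSq 0 f ≤
      homSobolevSq 1 f := by
    rw [inv_mul_eq_div, div_mul_eq_mul_div, div_le_iff₀ (by linarith)]
    nlinarith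
  linarith

/-! ### Regularity of solutions with Schwartz slices -/

namespace IsSchwartzSolution

section LocallyBounded

variable {k N : ℕ} {T a t : ℝ} {U : ℝ → SchwartzMap ℝ ℝ} {S : Set (SchwartzMap ℝ ℝ)}
  (hU : IsSchwartzSolution (fun y => y ^ k) T U)

include hU

theorem bddAbove_sobolevSq_one {I : Set ℝ} (hI : I.OrdConnected) (hIT : I ⊆ Icc 0 T)
    (hN : 2 ≤ N) (hb : ∀ c ∈ I, ∀ d ∈ I, BddAbove ((fun r => sobolevSq N (U r)) '' uIcc c d))
    (hS : EnergyCoerciveOn k S) (hUS : ∀ t ∈ I, U t ∈ S) :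
    BddAbove ((fun r => sobolevSq 1 (U r)) '' I) := by
  rcases I.eq_empty_or_nonempty with rfl | ⟨c, hc⟩
  · simp
  obtain ⟨b, coercive⟩ := hS (homSobolevSq 0 (U c)) (gkdvEnergy k (U c))
  refine ⟨homSobolevSq 0 (U c) + b, forall_mem_image.2 fun d hd => ?_⟩
  obtain ⟨X, hX⟩ := hb c hc d hd
  have hX (M : ℕ) (hM : M ≤ N) (r : ℝ) (hr : r ∈ uIcc c d) : sobolevSq M (U r) ≤ X :=
    (sobolevSq_mono (U r) hM).trans (hX ⟨r, hr, rfl⟩)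
  have hcd : uIcc c d ⊆ Icc 0 T := (hI.uIcc_subset hc hd).trans hIT
  have mass : homSobolevSq 0 (U d) = homSobolevSq 0 (U c) :=
    hU.homSobolevSq_zero_eq ordConnected_uIcc hcd (hX 1 (by omega)) left_mem_uIcc right_mem_uIcc
  have energy : gkdvEnergy k (U d) = gkdvEnergy k (U c) :=
    hU.gkdvEnergy_eq ordConnected_uIcc hcd (hX 2 hN) left_mem_uIcc right_mem_uIcc
  have hsum : sobolevSq 1 (U d) = homSobolevSq 0 (U d) + homSobolevSq 1 (U d) := by
    simp [sobolevSq, Finset.sum_range_succ]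
  exact hsum.trans_le (add_le_add mass.le (coercive _ (hUS d hd) mass energy))

theorem bddAbove_homSobolevSq_two (ha : a ∈ Icc 0 T) (ht : t ∈ Icc 0 T) (hN : 3 ≤ N)
    (hb : ∀ c ∈ uIcc a t \ {a}, ∀ d ∈ uIcc a t \ {a},
      BddAbove ((fun r => sobolevSq N (U r)) '' uIcc c d))
    (h₁ : BddAbove ((fun r => sobolevSq 1 (U r)) '' (uIcc a t \ {a}))) :
    BddAbove ((fun r => homSobolevSq 2 (U r)) '' (uIcc a t \ {a})) := by
  rcases (uIcc a t \ {a}).eq_empty_or_nonempty with hempty | ⟨p, hp⟩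
  · simp [hempty]
  obtain ⟨b, hb₁⟩ := h₁
  have hb₁ (r : ℝ) (hr : r ∈ uIcc a t \ {a}) : sobolevSq 1 (U r) ≤ b := hb₁ ⟨r, hr, rfl⟩
  have hb₀ : 0 ≤ b := (sobolevSq_nonneg _ _).trans (hb₁ p hp)
  obtain ⟨A, hA, source⟩ := exists_l1Bound_modifiedEnergySource k hb₀
  set A' := 5 / 3 * ((b ^ k * b + b) / 2)
  have hA' : 0 ≤ A' := by positivity
  refine bddAbove_image_uIcc_diff_singleton (e := fun r => modifiedEnergy k (U r)) (A := A + A')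
    (fun r => homSobolevSq_nonneg (U r) 2) (fun c hc d hd => ?_) (fun c hc d hd Y hY => ?_)
    fun r hr => (abs_homSobolevSq_two_sub_modifiedEnergy_le k (hb₁ r hr)).trans
      (le_add_of_nonneg_left hA)
  · exact bddAbove_image_of_le
      (fun r _ => homSobolevSq_le_sobolevSq (U r) (by omega : 2 ≤ N)) (hb c hc d hd)
  · have hcd : uIcc c d ⊆ uIcc a t \ {a} :=
      (ordConnected_uIcc_diff_singleton a t).uIcc_subset hc hd
    obtain ⟨X, hX⟩ := hb c hc d hd
    have hY₀ : 0 ≤ Y := (homSobolevSq_nonneg _ _).trans (hY c left_mem_uIcc)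
    refine (hU.abs_modifiedEnergy_sub_le ordConnected_uIcc
      (hcd.trans (sdiff_subset.trans (ordConnected_Icc.uIcc_subset ha ht)))
      (fun r hr => (sobolevSq_mono (U r) hN).trans (hX ⟨r, hr, rfl⟩))
      (fun r hr => source (U r) Y (hb₁ r (hcd hr)) (hY r hr)) left_mem_uIcc right_mem_uIcc).trans ?_
    gcongr
    exact le_add_of_nonneg_right hA'

theorem bddAbove_homSobolevSq_add_three (ha : a ∈ Icc 0 T) (ht : t ∈ Icc 0 T) {i : ℕ}
    (hi : i + 3 ≤ N)
    (hb : ∀ c ∈ uIcc a t \ {a}, ∀ d ∈ uIcc a t \ {a},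
      BddAbove ((fun r => sobolevSq N (U r)) '' uIcc c d))
    (h₂ : BddAbove ((fun r => sobolevSq (i + 2) (U r)) '' (uIcc a t \ {a}))) :
    BddAbove ((fun r => homSobolevSq (i + 3) (U r)) '' (uIcc a t \ {a})) := by
  obtain ⟨b₀, hb₀⟩ := h₂
  set b := max b₀ 1
  have hb₁ : 1 ≤ b := le_max_right b₀ 1
  have hlow (r : ℝ) (hr : r ∈ uIcc a t \ {a}) : sobolevSq (i + 2) (U r) ≤ b :=
    (hb₀ ⟨r, hr, rfl⟩).trans (le_max_left b₀ 1)
  obtain ⟨R', hR', hR⟩ := exists_deriv_nonlinearityRemainder k (i + 2)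
  obtain ⟨C, hC, bound⟩ := exists_l2SqBound_of_mem_diffPoly
    (fun l hd hw hl f => l2SqBound_diffMonomial_linear f (by omega : 2 ≤ i + 2) hd hw hl) hR'
  refine bddAbove_image_uIcc_diff_singleton (e := fun r => homSobolevSq (i + 3) (U r))
    (A := 3 * (k + 1) * b ^ k + 1 + C * (b ^ k * b)) (fun r => homSobolevSq_nonneg _ _)
    (fun c hc d hd => bddAbove_image_of_le (fun r _ => homSobolevSq_le_sobolevSq (U r) hi)
      (hb c hc d hd))
    (fun c hc d hd Y hY => ?_) (fun r _ => by rw [sub_self, abs_zero]; positivity)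
  have hcd : uIcc c d ⊆ uIcc a t \ {a} :=
    (ordConnected_uIcc_diff_singleton a t).uIcc_subset hc hd
  have hY₀ : 0 ≤ Y := (homSobolevSq_nonneg _ _).trans (hY c left_mem_uIcc)
  have hsource (r : ℝ) (hr : r ∈ uIcc c d) : L2SqBound (R' (U r)) (C * (b ^ k * (b + Y))) := by
    refine (bound (U r)).mono (mul_le_mul_of_nonneg_left ?_ hC)
    rw [sobolevSq_succ (U r) (i + 2)]
    have := hlow r (hcd hr)
    have := hY r hr
    have := sobolevSq_nonneg (U r) (i + 2)
    have := homSobolevSq_nonneg (U r) (i + 2 + 1)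
    gcongr
  refine (hU.abs_homSobolevSq_succ_sub_le ordConnected_uIcc
    (hcd.trans (sdiff_subset.trans (ordConnected_Icc.uIcc_subset ha ht))) (by positivity : 0 < b)
    (fun r hr => (sobolevSq_mono (U r) (by omega)).trans ((hlow r (hcd hr)).trans ?_)) hY hR hsource
    one_pos left_mem_uIcc right_mem_uIcc).trans ?_
  · nlinarith
  · refine mul_le_mul_of_nonneg_right ?_ (abs_nonneg _)
    have hsplit : C * b ^ k * (b + Y) ≤ C * b ^ k * (b + b * Y) := by
      gcongr
      exact le_mul_of_one_le_left hY₀ hb₁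
    have : 0 ≤ 3 * (k + 1) * b ^ k := by positivity
    linarith

theorem bddAbove_sobolevSq_diff_singleton (ha : a ∈ Icc 0 T) (ht : t ∈ Icc 0 T) (hN : 3 ≤ N)
    (hb : ∀ c ∈ uIcc a t \ {a}, ∀ d ∈ uIcc a t \ {a},
      BddAbove ((fun r => sobolevSq N (U r)) '' uIcc c d))
    (hS : EnergyCoerciveOn k S) (hUS : ∀ t ∈ Icc 0 T, U t ∈ S) :
    BddAbove ((fun r => sobolevSq N (U r)) '' (uIcc a t \ {a})) := by
  have hIT : uIcc a t \ {a} ⊆ Icc 0 T := sdiff_subset.trans (ordConnected_Icc.uIcc_subset ha ht)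
  have add_succ {M : ℕ} (hM : BddAbove ((fun r => sobolevSq M (U r)) '' (uIcc a t \ {a})))
      (hM' : BddAbove ((fun r => homSobolevSq (M + 1) (U r)) '' (uIcc a t \ {a}))) :
      BddAbove ((fun r => sobolevSq (M + 1) (U r)) '' (uIcc a t \ {a})) := by
    obtain ⟨X, hX⟩ := hM
    obtain ⟨Y, hY⟩ := hM'
    refine ⟨X + Y, forall_mem_image.2 fun r hr => (sobolevSq_succ (U r) M).trans_le ?_⟩
    exact add_le_add (hX ⟨r, hr, rfl⟩) (hY ⟨r, hr, rfl⟩)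
  have h₁ := hU.bddAbove_sobolevSq_one (ordConnected_uIcc_diff_singleton a t) hIT (by omega) hb hS
    fun r hr => hUS r (hIT hr)
  have all (i : ℕ) (hi : i + 2 ≤ N) :
      BddAbove ((fun r => sobolevSq (i + 2) (U r)) '' (uIcc a t \ {a})) := by
    induction i with
    | zero => exact add_succ h₁ (hU.bddAbove_homSobolevSq_two ha ht hN hb h₁)
    | succ i ih =>
      have h := ih (by omega)
      exact add_succ h (hU.bddAbove_homSobolevSq_add_three ha ht hi hb h)
  obtain ⟨i, rfl⟩ := Nat.exists_eq_add_of_le' (by omega : 2 ≤ N)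
  exact all i le_rfl

end LocallyBounded

theorem bddAbove_sobolevSq {k : ℕ} {T : ℝ} {U : ℝ → SchwartzMap ℝ ℝ} {S : Set (SchwartzMap ℝ ℝ)}
    (hU : IsSchwartzSolution (fun y => y ^ k) T U) (hS : EnergyCoerciveOn k S)
    (hUS : ∀ t ∈ Icc 0 T, U t ∈ S) (N : ℕ) :
    BddAbove ((fun r => sobolevSq N (U r)) '' Icc 0 T) := by
  refine bddAbove_image_of_le
    (fun r _ => sobolevSq_mono (U r) (Nat.le_add_right N 3)) (bddAbove_image_of_gap isCompact_Icc
      ordConnected_Icc (fun n => isClosed_Icc.inter (isClosed_setOf_sobolevSq_le hU.1 (N + 3) n))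
      fun n => ?_)
  obtain ⟨D, hD, persist⟩ := exists_sobolevSq_le_four_mul k (by omega : 2 ≤ N + 3)
  refine ⟨(D * (n + 1 : ℝ) ^ k)⁻¹, by positivity, 4 * (n + 1 : ℝ) ^ 2,
    fun a ha t ht hn hτ hb => ?_⟩
  refine persist hU ha ht (by positivity) ?_ (hn.trans (by nlinarith [n.cast_nonneg (α := ℝ)])) ?_
    t right_mem_uIcc
  · rw [← insert_sdiff_self_of_mem (left_mem_uIcc : a ∈ uIcc a t), image_insert_eq]
    exact (hU.bddAbove_sobolevSq_diff_singleton ha ht (by omega) hb hS hUS).insert _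
  · exact (le_inv_mul_iff₀ (by positivity)).1 (by rwa [mul_one])

end IsSchwartzSolution

/-! ### Difference of two solutions -/

theorem exists_l2SqBound_nonlinearity (k : ℕ) {m N : ℕ} (hN : 2 ≤ N) (hm : m + 1 ≤ N) :
    ∃ C, 0 ≤ C ∧ ∀ {f : SchwartzMap ℝ ℝ} {X : ℝ}, sobolevSq N f ≤ X →
      L2SqBound (nonlinearity k m f) (C * X ^ (k + 1)) := by
  obtain ⟨C, hC, bound⟩ := exists_l2SqBound_of_mem_diffPoly
    (fun l hd hw hl f => l2SqBound_diffMonomial f hN hd (by omega) fun i hi =>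
      (hl i hi).trans (by omega)) (nonlinearityRemainder_mem_diffPoly k m)
  refine ⟨2 + 2 * C, by positivity, fun {f X} hX => ?_⟩
  have top := (l2SqBound_iteratedDeriv_of_le hm hX).pow_mul (by omega) hX k
  have remainder := (bound f).mono
    (mul_le_mul_of_nonneg_left (pow_le_pow_left₀ (sobolevSq_nonneg f N) hX _) hC)
  convert top.add remainder using 1
  · ext x
    simp only [nonlinearityRemainder]
    ring
  · ring

section ForcedAiry

variable {w : ℝ → SchwartzMap ℝ ℝ} {F : ℝ → ℝ → ℝ} {m : ℕ} {T X G : ℝ}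

theorem homSobolevSq_le_of_forcing (hw : ContDiff ℝ ∞ fun p : ℝ × ℝ => w p.1 p.2) (hT : 0 < T)
    (hF : ∀ t ∈ Icc 0 T, ∀ x, timeDeriv w m t x = -iteratedDeriv (m + 3) (w t) x - F t x)
    (hX : ∀ t ∈ Icc 0 T, sobolevSq (m + 1) (w t) ≤ X) (hG : ∀ t ∈ Icc 0 T, L2SqBound (F t) G) :
    ∀ t ∈ Icc 0 T, homSobolevSq m (w t) ≤ 2 * (homSobolevSq m (w 0) + 2 * T ^ 2 * G) := by
  have h₀ : (0 : ℝ) ∈ Icc 0 T := left_mem_Icc.2 hT.le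
  refine le_two_mul_of_forall_upperBound
    ⟨X, forall_mem_image.2 fun t ht => (homSobolevSq_le_sobolevSq _ m.le_succ).trans (hX t ht)⟩
    fun Y hY t ht => ?_
  have hY₀ : 0 ≤ Y := (homSobolevSq_nonneg _ _).trans (hY 0 h₀)
  have hG₀ : 0 ≤ G := (hG 0 h₀).nonneg
  have drift := abs_homSobolevSq_add_integral_sub_le hw ordConnected_Icc hF hX (p := 0) (p' := 0)
    (q := 0) (q' := 0) (g := fun t x => -2 * (iteratedDeriv m (w t) x * F t x))
    (fun _ => integrable_zero _ _ _) continuous_const (fun _ _ => hasDerivAt_const _ _)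
    (fun _ _ _ => hasDerivAt_const _ _)
    (fun _ _ _ => by simp only [Pi.zero_apply]; ring)
    (fun t ht => (((l2SqBound_iteratedDeriv (w t) m).mono (hY t ht)).mul (hG t ht)
      (by positivity : 0 < (2 * T)⁻¹)).const_mul (-2))
    ⟨0, fun _ _ => l1Bound_zero⟩ h₀ ht
  simp only [Pi.zero_apply, integral_zero, add_zero, sub_zero, abs_neg, abs_two] at drift
  have hrate : 2 * (((2 * T)⁻¹ * Y + (2 * T)⁻¹⁻¹ * G) / 2) * |t| ≤ Y / 2 + 2 * T ^ 2 * G := by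
    calc 2 * (((2 * T)⁻¹ * Y + (2 * T)⁻¹⁻¹ * G) / 2) * |t|
        ≤ 2 * (((2 * T)⁻¹ * Y + (2 * T)⁻¹⁻¹ * G) / 2) * T := by
          gcongr
          exact (abs_of_nonneg ht.1).trans_le ht.2
      _ = Y / 2 + 2 * T ^ 2 * G := by field_simp
  linarith [le_of_abs_le drift]

end ForcedAiry

section Sub

theorem iteratedDeriv_schwartz_sub (f g : SchwartzMap ℝ ℝ) (m : ℕ) (x : ℝ) :
    iteratedDeriv m (⇑(f - g)) x = iteratedDeriv m f x - iteratedDeriv m g x := by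
  rw [show ⇑(f - g) = ⇑f - ⇑g from rfl,
    iteratedDeriv_sub (f.smooth m).contDiffAt (g.smooth m).contDiffAt]

theorem sobolevSq_sub_le (f g : SchwartzMap ℝ ℝ) (M : ℕ) :
    sobolevSq M (f - g) ≤ 2 * sobolevSq M f + 2 * sobolevSq M g := by
  simp only [sobolevSq, Finset.mul_sum, ← Finset.sum_add_distrib]
  refine Finset.sum_le_sum fun m _ => ?_
  simpa only [homSobolevSq, iteratedDeriv_schwartz_sub] using
    ((l2SqBound_iteratedDeriv f m).sub (l2SqBound_iteratedDeriv g m)).le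

theorem timeDeriv_sub {u U : ℝ → SchwartzMap ℝ ℝ}
    (hu : ContDiff ℝ ∞ fun p : ℝ × ℝ => u p.1 p.2) (hU : ContDiff ℝ ∞ fun p : ℝ × ℝ => U p.1 p.2)
    (m : ℕ) (t x : ℝ) : timeDeriv (u - U) m t x = timeDeriv u m t x - timeDeriv U m t x := by
  simp only [timeDeriv, Pi.sub_apply, iteratedDeriv_schwartz_sub]
  exact ((hasDerivAt_timeDeriv hu m t x).sub (hasDerivAt_timeDeriv hU m t x)).deriv

end Sub

theorem exists_homSobolevSq_sub_le (k l : ℕ) {m N : ℕ} (hN : 2 ≤ N) (hm : m + 1 ≤ N) :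
    ∃ C, 0 ≤ C ∧ ∀ {T X Z : ℝ} {u U : ℝ → SchwartzMap ℝ ℝ}, 0 < T →
      IsSchwartzSolution (fun y => y ^ k) T u → IsSchwartzSolution (fun y => y ^ l) T U →
      (∀ t ∈ Icc 0 T, sobolevSq N (u t) ≤ X) → (∀ t ∈ Icc 0 T, sobolevSq N (U t) ≤ Z) →
      ∀ t ∈ Icc 0 T, homSobolevSq m (u t - U t) ≤
        2 * homSobolevSq m (u 0 - U 0) + C * T ^ 2 * (X ^ (k + 1) + Z ^ (l + 1)) := by
  obtain ⟨C, hC, boundk⟩ := exists_l2SqBound_nonlinearity k hN hm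
  obtain ⟨D, hD, boundl⟩ := exists_l2SqBound_nonlinearity l hN hm
  refine ⟨8 * (C + D), by positivity, fun {T X Z u U} hT hu hU hX hZ t ht => ?_⟩
  have forced (τ : ℝ) (hτ : τ ∈ Icc 0 T) (x : ℝ) : timeDeriv (u - U) m τ x =
      -iteratedDeriv (m + 3) (⇑((u - U) τ)) x -
        (nonlinearity k m (u τ) x - nonlinearity l m (U τ) x) := by
    rw [timeDeriv_sub hu.1 hU.1, hu.timeDeriv_eq m hτ, hU.timeDeriv_eq m hτ, Pi.sub_apply,
      iteratedDeriv_schwartz_sub]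
    ring
  have hbound := homSobolevSq_le_of_forcing (w := u - U) (hu.1.sub hU.1) hT forced
    (fun τ hτ => (sobolevSq_sub_le (u τ) (U τ) (m + 1)).trans (add_le_add
      (mul_le_mul_of_nonneg_left ((sobolevSq_mono _ hm).trans (hX τ hτ)) zero_le_two)
      (mul_le_mul_of_nonneg_left ((sobolevSq_mono _ hm).trans (hZ τ hτ)) zero_le_two)))
    (fun τ hτ => (boundk (hX τ hτ)).sub (boundl (hZ τ hτ))) t ht
  have hX₀ : 0 ≤ X := (sobolevSq_nonneg _ _).trans (hX t ht)
  have hZ₀ : 0 ≤ Z := (sobolevSq_nonneg _ _).trans (hZ t ht)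
  refine hbound.trans ?_
  have hCZ : 0 ≤ T ^ 2 * (C * Z ^ (l + 1)) := by positivity
  have hDX : 0 ≤ T ^ 2 * (D * X ^ (k + 1)) := by positivity
  simp only [Pi.sub_apply]
  linarith

theorem exists_sobolevSq_sub_le (k l : ℕ) {s : ℕ} (hs : 1 ≤ s) :
    ∃ C, 0 ≤ C ∧ ∀ {T X Z : ℝ} {u U : ℝ → SchwartzMap ℝ ℝ}, 0 < T →
      IsSchwartzSolution (fun y => y ^ k) T u → IsSchwartzSolution (fun y => y ^ l) T U →
      (∀ t ∈ Icc 0 T, sobolevSq (s + 1) (u t) ≤ X) →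
      (∀ t ∈ Icc 0 T, sobolevSq (s + 1) (U t) ≤ Z) →
      ∀ t ∈ Icc 0 T, sobolevSq s (u t - U t) ≤
        2 * sobolevSq s (u 0 - U 0) + C * T ^ 2 * (X ^ (k + 1) + Z ^ (l + 1)) := by
  choose! C hC bound using fun m (hm : m + 1 ≤ s + 1) =>
    exists_homSobolevSq_sub_le k l (Nat.succ_le_succ hs) hm
  refine ⟨∑ m ∈ Finset.range (s + 1), C m, Finset.sum_nonneg fun m hm =>
    hC m (Finset.mem_range.1 hm), fun {T X Z u U} hT hu hU hX hZ t ht => ?_⟩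
  simp only [sobolevSq, Finset.mul_sum, Finset.sum_mul, ← Finset.sum_add_distrib] at hX hZ ⊢
  exact Finset.sum_le_sum fun m hm => bound m (Finset.mem_range.1 hm) hT hu hU hX hZ t ht

theorem exists_hNorm_sub_le (k : ℕ) {s : ℕ} (hs : 1 ≤ s) {c₀ C₀ C T : ℝ} (hC : 0 < C) (hT : 0 < T) :
    ∃ Ct, 0 < Ct ∧ ∀ {ε : ℝ} {u U : ℝ → SchwartzMap ℝ ℝ}, 0 < ε →
      IsSchwartzSolution (fun y => y ^ 1) T u → IsSchwartzSolution (fun y => y ^ k) T U →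
      (∀ t ∈ Icc 0 T, sobolevSq (s + 1) (u t) ≤ 4 * (c₀ * ε) ^ 2) →
      (∀ t ∈ Icc 0 T, sobolevSq (s + 1) (U t) ≤ 4 * (C₀ * ε) ^ 2) →
      hNorm s (⇑(u 0 - U 0)) ≤ C * max (ε ^ 2) (ε ^ (k + 1)) →
      ∀ t ∈ Icc 0 T, hNorm s (⇑(u t - U t)) ≤ Ct * max (ε ^ 2) (ε ^ (k + 1)) := by
  obtain ⟨D, hD, bound⟩ := exists_sobolevSq_sub_le 1 k hs
  set A := 2 * C ^ 2 + D * T ^ 2 * ((4 * c₀ ^ 2) ^ (1 + 1) + (4 * C₀ ^ 2) ^ (k + 1)) with hA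
  have hA₀ : 0 < A := by positivity
  refine ⟨√A, Real.sqrt_pos.2 hA₀, fun {ε u U} hε hu hU hbu hbU hinit t ht => ?_⟩
  set δ := max (ε ^ 2) (ε ^ (k + 1)) 
  have hδ₀ : 0 ≤ δ := le_max_of_le_left (sq_nonneg ε)
  have scale (c : ℝ) {j : ℕ} (hj : ε ^ (j + 1) ≤ δ) :
      (4 * (c * ε) ^ 2) ^ (j + 1) ≤ (4 * c ^ 2) ^ (j + 1) * δ ^ 2 := by
    rw [mul_pow c, ← mul_assoc, mul_pow _ (ε ^ 2), pow_right_comm ε]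
    gcongr
  have hu_pow := scale c₀ (j := 1) (le_max_left _ _)
  have hU_pow := scale C₀ (j := k) (le_max_right _ _)
  have hinit_sq : sobolevSq s (u 0 - U 0) ≤ C ^ 2 * δ ^ 2 := by
    rw [← hNorm_sq, ← mul_pow]
    exact pow_le_pow_left₀ (hNorm_nonneg _ _) hinit 2
  refine le_of_sq_le_sq ?_ (mul_nonneg (sqrt_nonneg A) hδ₀)
  calc hNorm s (⇑(u t - U t)) ^ 2 = sobolevSq s (u t - U t) := hNorm_sq _ s
    _ ≤ 2 * sobolevSq s (u 0 - U 0) + D * T ^ 2 *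
        ((4 * (c₀ * ε) ^ 2) ^ (1 + 1) + (4 * (C₀ * ε) ^ 2) ^ (k + 1)) :=
      bound hT hu hU hbu hbU t ht
    _ ≤ 2 * (C ^ 2 * δ ^ 2) + D * T ^ 2 *
        ((4 * c₀ ^ 2) ^ (1 + 1) * δ ^ 2 + (4 * C₀ ^ 2) ^ (k + 1) * δ ^ 2) := by gcongr
    _ = (√A * δ) ^ 2 := by
      rw [mul_pow √A, sq_sqrt hA₀.le, hA]
      ring

/-! ### A priori bounds on the time interval -/

theorem exists_sobolevSq_le_of_le_mul_inv (k : ℕ) {N : ℕ} (hN : 2 ≤ N) :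
    ∃ c, 0 < c ∧ ∀ {T ρ : ℝ} {U : ℝ → SchwartzMap ℝ ℝ}, 0 < T →
      IsSchwartzSolution (fun y => y ^ k) T U →
      BddAbove ((fun t => sobolevSq N (U t)) '' Icc 0 T) → U 0 ≠ 0 →
      T ≤ c * (hNorm N (U 0) ^ k)⁻¹ → hNorm N (U 0) ≤ ρ →
      ∀ t ∈ Icc 0 T, sobolevSq N (U t) ≤ 4 * ρ ^ 2 := by
  obtain ⟨D, hD, persist⟩ := exists_sobolevSq_le_four_mul k hN
  refine ⟨D⁻¹, inv_pos.2 hD, fun {T ρ U} hT hU hb hne hsmall hρ t ht => ?_⟩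
  have hpos : 0 < hNorm N (U 0) := hNorm_pos hne (by omega)
  rw [← uIcc_of_le hT.le] at hb ht
  refine (persist hU (left_mem_Icc.2 hT.le) (right_mem_Icc.2 hT.le) hpos hb
    (hNorm_sq (U 0) N).ge ?_ t ht).trans (by gcongr)
  rw [sub_zero, abs_of_pos hT, ← le_inv_mul_iff₀ (by positivity), mul_one, mul_inv]
  exact hsmall

theorem IsSchwartzSolution.bddAbove_sobolevSq_of_linfNorm_sub_le {k : ℕ} {T K : ℝ}
    {u U : ℝ → SchwartzMap ℝ ℝ} (hu : IsSchwartzSolution (fun y => y ^ 1) T u)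
    (hU : IsSchwartzSolution (fun y => y ^ k) T U)
    (hK : ∀ t ∈ Icc 0 T, linfNorm (⇑(u t - U t)) ≤ K) (N : ℕ) :
    BddAbove ((fun t => sobolevSq N (u t)) '' Icc 0 T) ∧
      BddAbove ((fun t => sobolevSq N (U t)) '' Icc 0 T) := by
  have hu_bdd := hu.bddAbove_sobolevSq energyCoerciveOn_univ fun _ _ => mem_univ _
  obtain ⟨M, hM⟩ := hu_bdd 1
  refine ⟨hu_bdd N, hU.bddAbove_sobolevSq (energyCoerciveOn_of_abs_le k (√M + K))
    (fun t ht x => ?_) N⟩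
  have hux : |u t x| ≤ √M := abs_le_sqrt <| by
    simpa only [iteratedDeriv_zero] using
      (sq_iteratedDeriv_le (u t) (m := 0) le_rfl x).trans (hM ⟨t, ht, rfl⟩)
  calc |U t x| = |u t x - (u t - U t) x| := by rw [sub_apply, sub_sub_cancel]
    _ ≤ |u t x| + |(u t - U t) x| := abs_sub _ _
    _ ≤ √M + K := add_le_add hux ((abs_apply_le_linfNorm (u t - U t) x).trans (hK t ht))

theorem iSup_le_and_iSup_le_of_forall_upperBound {ι : Type*} {f g : ι → ℝ} {B : ℝ} (hB : 0 ≤ B)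
    (hfg : ∀ i, f i ≤ g i) (h : ∀ K, (∀ i, f i ≤ K) → ∀ i, g i ≤ B) :
    (⨆ i, g i) ≤ B ∧ (⨆ i, f i) ≤ B := by
  by_cases hf : BddAbove (range f)
  · obtain ⟨K, hK⟩ := hf
    have hg := h K fun i => hK ⟨i, rfl⟩
    exact ⟨Real.iSup_le hg hB, Real.iSup_le (fun i => (hfg i).trans (hg i)) hB⟩
  · have hg : ¬BddAbove (range g) := mt (BddAbove.range_mono g hfg) hf
    -- The supremum of an unbounded family of reals is `0` by convention.
    rw [Real.iSup_of_not_bddAbove hf, Real.iSup_of_not_bddAbove hg]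
    exact ⟨hB, hB⟩

end

/-- `H^s` and `L^∞` proximity between the KdV equation and the gKdV equation
with power nonlinearity `∂ₜU + ∂ₓ³U + Uᵏ∂ₓU = 0`:
`sup_{t∈[0,T]} ‖u(t) − U(t)‖_{H^s} ≤ C̃ₛ·max{ε², ε^{k+1}}` and consequently
`sup_{t∈[0,T]} ‖u(t) − U(t)‖_{L^∞} ≤ C̃ₛ·max{ε², ε^{k+1}}`. -/
theorem kdv_gkdv_power_Hs_proximity (k : ℕ) (hk : 1 ≤ k) (s : ℕ) (hs : 1 ≤ s) :
    ∃ cs : ℝ, 0 < cs ∧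
      ∀ c₀ C₀ C T : ℝ, 0 < c₀ → 0 < C₀ → 0 < C → 0 < T →
        ∃ Ct : ℝ, 0 < Ct ∧
          ∀ ε : ℝ, 0 < ε →
            ∀ u U : ℝ → SchwartzMap ℝ ℝ,
              IsSchwartzSolution (fun y => y) T u →
              IsSchwartzSolution (fun y => y ^ k) T U →
              u 0 ≠ 0 → U 0 ≠ 0 →
              T ≤ cs * min (hNorm (s + 1) (⇑(U 0)) ^ k)⁻¹ (hNorm (s + 1) (⇑(u 0)))⁻¹ →
              hNorm (s + 1) (⇑(u 0)) ≤ c₀ * ε →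
              hNorm (s + 1) (⇑(U 0)) ≤ C₀ * ε →
              hNorm s (fun x => u 0 x - U 0 x) ≤ C * max (ε ^ 2) (ε ^ (k + 1)) →
              (⨆ t : Set.Icc (0 : ℝ) T, hNorm s (fun x => u (t : ℝ) x - U (t : ℝ) x))
                  ≤ Ct * max (ε ^ 2) (ε ^ (k + 1)) ∧
                (⨆ t : Set.Icc (0 : ℝ) T, linfNorm (fun x => u (t : ℝ) x - U (t : ℝ) x))
                  ≤ Ct * max (ε ^ 2) (ε ^ (k + 1)) := by
  obtain ⟨c₁, hc₁, bound_u⟩ := exists_sobolevSq_le_of_le_mul_inv 1 (N := s + 1) (by omega)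
  obtain ⟨c₂, hc₂, bound_U⟩ := exists_sobolevSq_le_of_le_mul_inv k (N := s + 1) (by omega)
  refine ⟨min c₁ c₂, lt_min hc₁ hc₂, fun c₀ C₀ C T _ _ hC hT => ?_⟩
  obtain ⟨Ct, hCt, proximity⟩ := exists_hNorm_sub_le k hs (c₀ := c₀) (C₀ := C₀) hC hT
  refine ⟨Ct, hCt, fun ε hε u U hu hU hu_ne hU_ne hsmall hu_le hU_le hinit => ?_⟩
  replace hu : IsSchwartzSolution (fun y => y ^ 1) T u := by simpa only [pow_one] using hu
  refine iSup_le_and_iSup_le_of_forall_upperBound (by positivity)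
    (fun t => linfNorm_le_hNorm (u t - U t) hs) fun K hK t => ?_
  obtain ⟨hu_bdd, hU_bdd⟩ :=
    hu.bddAbove_sobolevSq_of_linfNorm_sub_le hU (fun t ht => hK ⟨t, ht⟩) (s + 1)
  have hmin₀ : 0 ≤ min (hNorm (s + 1) (⇑(U 0)) ^ k)⁻¹ (hNorm (s + 1) (⇑(u 0)))⁻¹ :=
    le_min (inv_nonneg.2 (pow_nonneg (hNorm_nonneg _ _) k)) (inv_nonneg.2 (hNorm_nonneg _ _))
  have hsmall_u : T ≤ c₁ * (hNorm (s + 1) (⇑(u 0)) ^ 1)⁻¹ := (pow_one (hNorm _ _)).symm ▸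
    hsmall.trans (mul_le_mul (min_le_left _ _) (min_le_right _ _) hmin₀ hc₁.le)
  have hsmall_U : T ≤ c₂ * (hNorm (s + 1) (⇑(U 0)) ^ k)⁻¹ :=
    hsmall.trans (mul_le_mul (min_le_right _ _) (min_le_left _ _) hmin₀ hc₂.le)
  exact proximity hε hu hU (bound_u hT hu hu_bdd hu_ne hsmall_u hu_le)
    (bound_U hT hU hU_bdd hU_ne hsmall_U hU_le) hinit t t.2
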